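/- Let n ≥ 2 and let X ⊆ ℂ^n be an open set. Assume there is a smooth (C^∞) exhaustion function ρ : X → ℝ such that at each point z ∈ X the Levi form of ρ has at least 2 positive eigenvalues. Then for every point p ∈ X and every vector v ∈ ℂ^n there exist a real number λ > 0 and a holomorphic map f : 𝔻 → X which is proper (i.e. f⁻¹(K) is compact for every compact K ⊆ X) such that f(0) = p and f′(0) = λ·v. (This is the paper's Theorem 1 stated for domains in ℂ^n, where all notions are expressible without abstract complex-manifold theory.) -/

import Mathlib

open Metric

namespace ProperDisc

open Filter Topology

section

/-- A continuous function `a` on the closed unit disc is *power-approximable* if for all large `N`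
the function `a ζ * ζ ^ N` is uniformly close to an entire function. -/
def PowApprox (a : C(closedBall (0 : ℂ) 1, ℂ)) : Prop :=
  ∀ ε > 0, ∀ᶠ N : ℕ in atTop, ∃ p : ℂ → ℂ, Differentiable ℂ p ∧
    ∀ ζ : closedBall (0 : ℂ) 1, ‖p ζ - a ζ * (ζ : ℂ) ^ N‖ ≤ ε

lemma norm_coe_le_one (ζ : closedBall (0 : ℂ) 1) : ‖(ζ : ℂ)‖ ≤ 1 := by
  exact mem_closedBall_zero_iff.mp ζ.2

lemma pow_mul_one_sub_le {x : ℝ} (h0 : 0 ≤ x) (h1 : x ≤ 1) (m : ℕ) :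
    x ^ m * (1 - x) ≤ 1 / (m + 1) := by
  rw [le_div_iff₀ (by positivity)]
  have h2 : (m + 1 : ℝ) * x ^ m ≤ ∑ j ∈ Finset.range (m + 1), x ^ j := by
    have : ∑ j ∈ Finset.range (m + 1), x ^ m ≤ ∑ j ∈ Finset.range (m + 1), x ^ j :=
      Finset.sum_le_sum fun j hj => pow_le_pow_of_le_one h0 h1
        (Nat.lt_succ_iff.mp (Finset.mem_range.mp hj))
    simpa using this
  have h3 := geom_sum_mul_neg x (m + 1)
  have h4 : 0 ≤ x ^ (m + 1) := by positivity
  nlinarith [mul_le_mul_of_nonneg_right h2 (sub_nonneg.mpr h1)]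

lemma PowApprox.const (c : ℂ) : PowApprox (algebraMap ℂ C(closedBall (0 : ℂ) 1, ℂ) c) := by
  intro ε hε
  refine Eventually.of_forall fun N => ⟨fun ζ => c * ζ ^ N, by fun_prop, fun ζ => ?_⟩
  have : (algebraMap ℂ C(closedBall (0 : ℂ) 1, ℂ) c) ζ = c := rfl
  simp [this, hε.le]

lemma PowApprox.add {a b : C(closedBall (0 : ℂ) 1, ℂ)} (ha : PowApprox a) (hb : PowApprox b) :
    PowApprox (a + b) := by
  intro ε hε
  filter_upwards [ha (ε / 2) (by positivity), hb (ε / 2) (by positivity)] with N ⟨p, hp, hp'⟩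
    ⟨q, hq, hq'⟩
  refine ⟨fun ζ => p ζ + q ζ, by fun_prop, fun ζ => ?_⟩
  calc ‖p ζ + q ζ - (a + b) ζ * (ζ : ℂ) ^ N‖
      = ‖(p ζ - a ζ * (ζ : ℂ) ^ N) + (q ζ - b ζ * (ζ : ℂ) ^ N)‖ := by
        congr 1; simp only [ContinuousMap.add_apply]; ring
    _ ≤ ε / 2 + ε / 2 := norm_add_le_of_le (hp' ζ) (hq' ζ)
    _ = ε := by ring

lemma PowApprox.mul {a b : C(closedBall (0 : ℂ) 1, ℂ)} (ha : PowApprox a) (hb : PowApprox b) :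
    PowApprox (a * b) := by
  intro ε hε
  obtain ⟨n₁, p, hp, hp'⟩ := (ha (ε / (2 * (‖b‖ + 1))) (by positivity)).exists
  have hb' := hb (min 1 (ε / (2 * (‖a‖ + 1)))) (by positivity)
  have hb'' := (tendsto_sub_atTop_nat n₁).eventually hb'
  filter_upwards [hb'', eventually_ge_atTop n₁] with N ⟨q, hq, hq'⟩ hN
  refine ⟨fun ζ => p ζ * q ζ, by fun_prop, fun ζ => ?_⟩
  have hz := norm_coe_le_one ζ
  have e1 : (ζ : ℂ) ^ N = (ζ : ℂ) ^ n₁ * (ζ : ℂ) ^ (N - n₁) := by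
    rw [← pow_add, Nat.add_sub_cancel' hN]
  have e2 : p ζ * q ζ - (a * b) ζ * (ζ : ℂ) ^ N
      = (p ζ - a ζ * (ζ : ℂ) ^ n₁) * q ζ
        + (a ζ * (ζ : ℂ) ^ n₁) * (q ζ - b ζ * (ζ : ℂ) ^ (N - n₁)) := by
    rw [e1]; simp only [ContinuousMap.mul_apply]; ring
  have hzp : ∀ k : ℕ, ‖(ζ : ℂ) ^ k‖ ≤ 1 := fun k => by
    rw [norm_pow]; exact pow_le_one₀ (norm_nonneg _) hz
  have hqn : ‖q ζ‖ ≤ ‖b‖ + 1 := by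
    have h1 : ‖q ζ - b ζ * (ζ : ℂ) ^ (N - n₁)‖ ≤ 1 := (hq' ζ).trans (min_le_left _ _)
    have h2 : ‖b ζ * (ζ : ℂ) ^ (N - n₁)‖ ≤ ‖b‖ := by
      rw [norm_mul]
      calc _ ≤ ‖b‖ * 1 := mul_le_mul (b.norm_coe_le_norm ζ) (hzp _) (norm_nonneg _) (norm_nonneg _)
        _ = _ := mul_one _
    calc ‖q ζ‖ = ‖b ζ * (ζ : ℂ) ^ (N - n₁) + (q ζ - b ζ * (ζ : ℂ) ^ (N - n₁))‖ := by
          congr 1; ring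
      _ ≤ _ := norm_add_le_of_le h2 h1
  have han : ‖a ζ * (ζ : ℂ) ^ n₁‖ ≤ ‖a‖ + 1 := by
    rw [norm_mul]
    calc _ ≤ ‖a‖ * 1 := mul_le_mul (a.norm_coe_le_norm ζ) (hzp _) (norm_nonneg _) (norm_nonneg _)
      _ ≤ _ := by linarith
  rw [e2]
  have ha0 := norm_nonneg a
  have hb0 := norm_nonneg b
  calc _ ≤ ε / (2 * (‖b‖ + 1)) * (‖b‖ + 1) + (‖a‖ + 1) * (ε / (2 * (‖a‖ + 1))) := by
        refine norm_add_le_of_le ?_ ?_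
        · rw [norm_mul]
          exact mul_le_mul (hp' ζ) hqn (norm_nonneg _) (by positivity)
        · rw [norm_mul]
          exact mul_le_mul han ((hq' ζ).trans (min_le_right _ _)) (norm_nonneg _) (by positivity)
    _ = ε := by field_simp; ring

lemma PowApprox.id : PowApprox ((ContinuousMap.id ℂ).restrict (closedBall (0 : ℂ) 1)) := by
  intro ε hε
  refine Eventually.of_forall fun N => ⟨fun ζ => ζ * ζ ^ N, by fun_prop, fun ζ => ?_⟩
  simp [hε.le]

lemma PowApprox.star_id :
    PowApprox (star ((ContinuousMap.id ℂ).restrict (closedBall (0 : ℂ) 1))) := by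
  intro ε hε
  obtain ⟨m₀, hm₀⟩ := exists_nat_one_div_lt (show (0 : ℝ) < ε / 2 by positivity)
  filter_upwards [eventually_ge_atTop (m₀ + 1)] with N hN
  obtain ⟨m, rfl⟩ : ∃ m, N = m + 1 := ⟨N - 1, by omega⟩
  refine ⟨fun ζ => ζ ^ m, by fun_prop, fun ζ => ?_⟩
  have hz := norm_coe_le_one ζ
  set x := ‖(ζ : ℂ)‖ with hx
  have hx0 : 0 ≤ x := norm_nonneg _
  have e : (ζ : ℂ) ^ m - (star ((ContinuousMap.id ℂ).restrict (closedBall (0 : ℂ) 1))) ζ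
      * (ζ : ℂ) ^ (m + 1) = (ζ : ℂ) ^ m * ((1 - x ^ 2 : ℝ) : ℂ) := by
    have h : (starRingEnd ℂ) (ζ : ℂ) * ζ = ((x ^ 2 : ℝ) : ℂ) := by
      rw [hx, ← Complex.normSq_eq_norm_sq, Complex.normSq_eq_conj_mul_self]
    have h' : (star ((ContinuousMap.id ℂ).restrict (closedBall (0 : ℂ) 1))) ζ
      = (starRingEnd ℂ) (ζ : ℂ) := rfl
    rw [h', pow_succ]
    push_cast at h ⊢
    linear_combination (-(ζ : ℂ) ^ m) * h
  rw [e, norm_mul, norm_pow, Complex.norm_real, Real.norm_eq_abs, abs_of_nonneg (by nlinarith),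
    ← hx]
  have h1 := pow_mul_one_sub_le hx0 hz m
  have h2 : (1 : ℝ) / (m + 1) ≤ 1 / (m₀ + 1) := by
    apply one_div_le_one_div_of_le (by positivity)
    have : m₀ ≤ m := by omega
    exact_mod_cast Nat.succ_le_succ this
  have h3 : 0 ≤ x ^ m * (1 - x) := by
    have : 0 ≤ 1 - x := by linarith
    positivity
  nlinarith

lemma powApprox_all (a : C(closedBall (0 : ℂ) 1, ℂ)) : PowApprox a := by
  set ι := (ContinuousMap.id ℂ).restrict (closedBall (0 : ℂ) 1) with hι
  have key : ∀ b ∈ StarAlgebra.adjoin ℂ {ι}, PowApprox b ∧ PowApprox (star b) := by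
    intro b hb
    induction hb using StarAlgebra.adjoin_induction with
    | mem x h =>
      rw [Set.mem_singleton_iff] at h
      subst h
      exact ⟨PowApprox.id, PowApprox.star_id⟩
    | algebraMap r =>
      refine ⟨PowApprox.const r, ?_⟩
      rw [← algebraMap_star_comm]
      exact PowApprox.const _
    | add x y _ _ hx hy => exact ⟨hx.1.add hy.1, by rw [star_add]; exact hx.2.add hy.2⟩
    | mul x y _ _ hx hy => exact ⟨hx.1.mul hy.1, by rw [star_mul']; exact hx.2.mul hy.2⟩
    | star x _ hx => exact ⟨hx.2, by rw [star_star]; exact hx.1⟩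
  have hdense := ContinuousMap.starSubalgebra_topologicalClosure_eq_top_of_separatesPoints
    (StarAlgebra.adjoin ℂ {ι}) (by
      intro x y hxy
      refine ⟨ι, ⟨ι, StarAlgebra.subset_adjoin ℂ _ rfl, rfl⟩, ?_⟩
      exact fun h => hxy (Subtype.ext h))
  have ha : a ∈ closure ((StarAlgebra.adjoin ℂ {ι} : StarSubalgebra ℂ _) :
      Set C(closedBall (0 : ℂ) 1, ℂ)) := by
    have : a ∈ (StarAlgebra.adjoin ℂ {ι}).topologicalClosure := by rw [hdense]; trivial
    exact this
  intro ε hε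
  obtain ⟨b, hb, hab⟩ := Metric.mem_closure_iff.mp ha (ε / 2) (by positivity)
  filter_upwards [(key b hb).1 (ε / 2) (by positivity)] with N ⟨p, hp, hp'⟩
  refine ⟨p, hp, fun ζ => ?_⟩
  have hz := norm_coe_le_one ζ
  have h1 : ‖(b ζ - a ζ) * (ζ : ℂ) ^ N‖ ≤ ε / 2 := by
    rw [norm_mul, norm_pow]
    calc _ ≤ ε / 2 * 1 := by
          refine mul_le_mul ?_ (pow_le_one₀ (norm_nonneg _) hz) (by positivity) (by positivity)
          rw [← dist_eq_norm, dist_comm]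
          exact (ContinuousMap.dist_apply_le_dist ζ).trans hab.le
      _ = _ := mul_one _
  calc _ = ‖(p ζ - b ζ * (ζ : ℂ) ^ N) + (b ζ - a ζ) * (ζ : ℂ) ^ N‖ := by congr 1; ring
    _ ≤ ε / 2 + ε / 2 := norm_add_le_of_le (hp' ζ) h1
    _ = ε := by ring

variable {E : Type*} [NormedAddCommGroup E] [NormedSpace ℂ E] [FiniteDimensional ℂ E]

lemma exists_entire_approx_smul_pow {a : ℂ → E} (ha : Continuous a) {ε : ℝ} (hε : 0 < ε) :
    ∀ᶠ N : ℕ in atTop, ∃ p : ℂ → E, Differentiable ℂ p ∧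
      ∀ ζ : ℂ, ‖ζ‖ ≤ 1 → ‖p ζ - ζ ^ N • a ζ‖ ≤ ε := by
  set b := Module.finBasis ℂ E with hb
  set d := Module.finrank ℂ E
  set M : ℝ := ∑ i, ‖b i‖ + 1 with hM
  have hMpos : 0 < M := by positivity
  have hcoord : ∀ i, Continuous fun ζ => b.repr (a ζ) i := fun i =>
    (LinearMap.continuous_of_finiteDimensional (b.coord i)).comp ha
  have h : ∀ i, ∀ᶠ N : ℕ in atTop, ∃ p : ℂ → ℂ, Differentiable ℂ p ∧
      ∀ ζ : closedBall (0 : ℂ) 1, ‖p ζ - b.repr (a ζ) i * (ζ : ℂ) ^ N‖ ≤ ε / M := fun i =>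
    powApprox_all ⟨fun ζ => b.repr (a ζ) i, (hcoord i).comp continuous_subtype_val⟩ _
      (by positivity)
  filter_upwards [eventually_all.mpr h] with N hN
  choose p hp hp' using hN
  refine ⟨fun ζ => ∑ i, p i ζ • b i, by fun_prop, fun ζ hζ => ?_⟩
  have e : ∑ i, p i ζ • b i - ζ ^ N • a ζ = ∑ i, (p i ζ - b.repr (a ζ) i * ζ ^ N) • b i := by
    conv_lhs => rw [← b.sum_repr (a ζ)]
    rw [Finset.smul_sum, ← Finset.sum_sub_distrib]
    refine Finset.sum_congr rfl fun i _ => ?_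
    rw [sub_smul, smul_smul, mul_comm]
  rw [e]
  calc _ ≤ ∑ i, ε / M * ‖b i‖ := by
        refine norm_sum_le_of_le _ fun i _ => ?_
        rw [norm_smul]
        exact mul_le_mul_of_nonneg_right (hp' i ⟨ζ, by simpa using hζ⟩) (norm_nonneg _)
    _ = ε / M * ∑ i, ‖b i‖ := by rw [Finset.mul_sum]
    _ ≤ ε / M * M := by gcongr; simp [hM]
    _ = ε := by field_simp

end

section

variable {E : Type*} [NormedAddCommGroup E] [NormedSpace ℂ E]

/-- The Levi form of `φ` at `z` evaluated on `w`. -/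
noncomputable def levi (φ : E → ℝ) (z w : E) : ℝ :=
  fderiv ℝ (fderiv ℝ φ) z w w + fderiv ℝ (fderiv ℝ φ) z (Complex.I • w) (Complex.I • w)

/-- The Levi form of `φ` at `z` is positive definite on some complex plane. -/
def LeviTwoPos (φ : E → ℝ) (z : E) : Prop :=
  ∃ V : Submodule ℂ E, Module.finrank ℂ V = 2 ∧ ∀ w ∈ V, w ≠ 0 → 0 < levi φ z w

/-- `z` is not a critical point of `φ`, and the Levi form of `φ` at `z` is positive on some
complex tangent vector of the level set of `φ`. -/
def Regular (φ : E → ℝ) (z : E) : Prop :=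
  (∃ e, fderiv ℝ φ z e ≠ 0) ∧
    ∃ w, fderiv ℝ φ z w = 0 ∧ fderiv ℝ φ z (Complex.I • w) = 0 ∧ 0 < levi φ z w

/-- The complex-linear functional whose real part is `L`. -/
noncomputable def cplx (L : E →L[ℝ] ℝ) : E →ₗ[ℂ] ℂ where
  toFun v := (L v : ℂ) - Complex.I * L (Complex.I • v)
  map_add' x y := by simp only [smul_add, map_add]; push_cast; ring
  map_smul' c x := by
    have h1 : c • x = c.re • x + c.im • (Complex.I • x) := by
      conv_lhs => rw [← Complex.re_add_im c]
      rw [add_smul, mul_smul]; rfl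
    have h2 : Complex.I • (c • x) = c.re • (Complex.I • x) + (-c.im) • x := by
      rw [h1, smul_add, smul_comm, smul_comm Complex.I c.im, smul_smul Complex.I, Complex.I_mul_I]
      simp
    rw [h2, h1]
    simp only [map_add, map_smul, smul_eq_mul, RingHom.id_apply]
    conv_rhs => rw [← Complex.re_add_im c]
    push_cast
    linear_combination (c.im * L (Complex.I • x) : ℂ) * Complex.I_sq

lemma cplx_apply (L : E →L[ℝ] ℝ) (v : E) :
    cplx L v = (L v : ℂ) - Complex.I * L (Complex.I • v) := rfl

lemma cplx_re (L : E →L[ℝ] ℝ) (v : E) : (cplx L v).re = L v := by simp [cplx_apply]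

lemma cplx_im (L : E →L[ℝ] ℝ) (v : E) : (cplx L v).im = -L (Complex.I • v) := by
  simp [cplx_apply]

lemma cplx_eq_zero {L : E →L[ℝ] ℝ} {v : E} :
    cplx L v = 0 ↔ L v = 0 ∧ L (Complex.I • v) = 0 := by
  rw [Complex.ext_iff, cplx_re, cplx_im]; simp

lemma apply_smul_of_cplx_eq_zero {L : E →L[ℝ] ℝ} {v : E} (h : cplx L v = 0) (c : ℂ) :
    L (c • v) = 0 := by
  rw [← cplx_re, map_smul, h]; simp

lemma regular_of_leviTwoPos {φ : E → ℝ} {z : E} (h : LeviTwoPos φ z) (hd : fderiv ℝ φ z ≠ 0) :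
    Regular φ z := by
  obtain ⟨V, hV, hpos⟩ := h
  refine ⟨?_, ?_⟩
  · by_contra! hc
    exact hd (ContinuousLinearMap.ext hc)
  · have hfin : Module.Finite ℂ V := Module.finite_of_finrank_pos (by omega)
    have hker : 0 < Module.finrank ℂ (LinearMap.ker ((cplx (fderiv ℝ φ z)).comp V.subtype)) := by
      have h1 := LinearMap.finrank_range_add_finrank_ker ((cplx (fderiv ℝ φ z)).comp V.subtype)
      have h2 := Submodule.finrank_le (LinearMap.range ((cplx (fderiv ℝ φ z)).comp V.subtype))
      rw [Module.finrank_self] at h2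
      omega
    obtain ⟨w, hw⟩ := Module.finrank_pos_iff_exists_ne_zero.mp hker
    have hw0 : cplx (fderiv ℝ φ z) (w : V) = 0 := LinearMap.mem_ker.mp w.2
    refine ⟨(w : V), (cplx_eq_zero.mp hw0).1, (cplx_eq_zero.mp hw0).2, hpos _ (w : V).2 ?_⟩
    intro h; apply hw; ext; exact h

lemma add_sq_le_of_deriv2_ge {g g' g'' : ℝ → ℝ} {r c : ℝ}
    (h1 : ∀ s ∈ Set.Icc 0 r, HasDerivAt g (g' s) s)
    (h2 : ∀ s ∈ Set.Icc 0 r, HasDerivAt g' (g'' s) s) (h0 : g' 0 = 0)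
    (hc : ∀ s ∈ Set.Icc 0 r, c ≤ g'' s) {s : ℝ} (hs : s ∈ Set.Icc 0 r) :
    g 0 + c / 2 * s ^ 2 ≤ g s := by
  have hr : (0 : ℝ) ∈ Set.Icc 0 r := ⟨le_rfl, hs.1.trans hs.2⟩
  have d2 : ∀ s ∈ Set.Icc 0 r, HasDerivAt (fun s => g' s - c * s) (g'' s - c) s := fun s hs => by
    exact ((h2 s hs).sub ((hasDerivAt_id s).const_mul c)).congr_deriv (by simp)
  have m2 : MonotoneOn (fun s => g' s - c * s) (Set.Icc 0 r) := by
    refine monotoneOn_of_deriv_nonneg (convex_Icc 0 r)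
      (fun s hs => (d2 s hs).continuousAt.continuousWithinAt)
      (fun s hs => (d2 s (interior_subset hs)).differentiableAt.differentiableWithinAt)
      (fun s hs => ?_)
    rw [(d2 s (interior_subset hs)).deriv]
    linarith [hc s (interior_subset hs)]
  have d1 : ∀ s ∈ Set.Icc 0 r, HasDerivAt (fun s => g s - c / 2 * s ^ 2) (g' s - c * s) s :=
    fun s hs => by
      have := (h1 s hs).sub (((hasDerivAt_id s).pow 2).const_mul (c / 2))
      refine this.congr_deriv ?_
      simp; ring
  have m1 : MonotoneOn (fun s => g s - c / 2 * s ^ 2) (Set.Icc 0 r) := by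
    refine monotoneOn_of_deriv_nonneg (convex_Icc 0 r)
      (fun s hs => (d1 s hs).continuousAt.continuousWithinAt)
      (fun s hs => (d1 s (interior_subset hs)).differentiableAt.differentiableWithinAt)
      (fun s hs => ?_)
    rw [(d1 s (interior_subset hs)).deriv]
    have := m2 hr (interior_subset hs) (interior_subset hs).1
    simp only [h0] at this
    linarith
  have := m1 hr hs hs.1
  simp only at this
  nlinarith

/-- A continuous family of analytic discs in `X` of degree two along which `φ` increases. -/
structure PushField (φ : E → ℝ) (X : Set E) (W B : E → E) (κ : E → ℝ) (C : ℝ) : Prop where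
  contW : Continuous W
  contB : Continuous B
  contκ : Continuous κ
  nonneg : ∀ z, 0 ≤ κ z
  mem : ∀ z ∈ X, ∀ η : ℂ, ‖η‖ ≤ 1 → z + η • W z + η ^ 2 • B z ∈ X
  push : ∀ z ∈ X, ∀ η : ℂ, ‖η‖ ≤ 1 →
    φ z + κ z * ‖η‖ ^ 2 ≤ φ (z + η • W z + η ^ 2 • B z)
  bound : ∀ z, ‖W z‖ + ‖B z‖ ≤ C

lemma PushField.scale {φ : E → ℝ} {X : Set E} {W B : E → E} {κ : E → ℝ} {C : ℝ}
    (h : PushField φ X W B κ C) {s : ℝ} (h0 : 0 ≤ s) (h1 : s ≤ 1) :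
    PushField φ X (fun z => s • W z) (fun z => s ^ 2 • B z) (fun z => s ^ 2 * κ z) (s * C) := by
  have e : ∀ z, ∀ η : ℂ, z + η • (s • W z) + η ^ 2 • (s ^ 2 • B z)
      = z + (η * s) • W z + (η * s) ^ 2 • B z := by
    intro z η
    rw [mul_pow, mul_smul, mul_smul]
    norm_cast
  have hn : ∀ η : ℂ, ‖η * s‖ = ‖η‖ * s := fun η => by
    rw [norm_mul, Complex.norm_real, Real.norm_of_nonneg h0]
  have hn1 : ∀ η : ℂ, ‖η‖ ≤ 1 → ‖η * s‖ ≤ 1 := fun η hη => by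
    rw [hn]; exact mul_le_one₀ hη h0 h1
  refine ⟨h.contW.const_smul s, h.contB.const_smul _, h.contκ.const_mul _,
    fun z => mul_nonneg (sq_nonneg s) (h.nonneg z), fun z hz η hη => ?_, fun z hz η hη => ?_,
    fun z => ?_⟩
  · rw [e]; exact h.mem z hz _ (hn1 η hη)
  · rw [e]
    refine le_trans (le_of_eq ?_) (h.push z hz _ (hn1 η hη))
    rw [hn]; ring
  · rw [norm_smul, norm_smul, Real.norm_of_nonneg h0, Real.norm_of_nonneg (sq_nonneg s)]
    have := h.bound z
    have h3 : s ^ 2 * ‖B z‖ ≤ s * ‖B z‖ :=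
      mul_le_mul_of_nonneg_right (by nlinarith) (norm_nonneg _)
    nlinarith [norm_nonneg (W z)]

end

section

variable {E : Type*} [NormedAddCommGroup E] [NormedSpace ℂ E]

lemma exists_pushField_aux {φ : E → ℝ} {X : Set E} (hX : IsOpen X)
    (hφ : ∀ z ∈ X, ContDiffAt ℝ 2 φ z) {z₀ : E} (hz₀ : z₀ ∈ X) (hreg : Regular φ z₀) :
    ∃ (w : E → E) (u : E) (r c : ℝ), 0 < r ∧ 0 < c ∧ ContinuousOn w (ball z₀ r) ∧
      ∀ z ∈ ball z₀ r, ∀ η : ℂ, ‖η‖ ≤ r → z + η • w z + η ^ 2 • u ∈ X ∧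
        φ z + c * ‖η‖ ^ 2 ≤ φ (z + η • w z + η ^ 2 • u) := by
  obtain ⟨⟨e, he⟩, w₀, hw1, hw2, hw3⟩ := hreg
  set α : E → E →ₗ[ℂ] ℂ := fun z => cplx (fderiv ℝ φ z) with hα
  have hD : ∀ z ∈ X, ContDiffAt ℝ 1 (fderiv ℝ φ) z := fun z hz =>
    (hφ z hz).fderiv_right (by norm_num)
  have hDc : ∀ z ∈ X, ContinuousAt (fderiv ℝ φ) z := fun z hz => (hD z hz).continuousAt
  have hHc : ∀ z ∈ X, ContinuousAt (fderiv ℝ (fderiv ℝ φ)) z := fun z hz =>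
    ((hD z hz).fderiv_right (m := 0) (by norm_num)).continuousAt
  have hαc : ∀ v, ∀ z ∈ X, ContinuousAt (fun z => α z v) z := by
    intro v z hz
    have h1 : ∀ v, ContinuousAt (fun z => fderiv ℝ φ z v) z := fun v =>
      (hDc z hz).clm_apply continuousAt_const
    simp only [hα, cplx_apply]
    exact (Complex.continuous_ofReal.continuousAt.comp (h1 v)).sub
      (continuousAt_const.mul (Complex.continuous_ofReal.continuousAt.comp (h1 _)))
  have hαe : α z₀ e ≠ 0 := fun h => he (cplx_eq_zero.mp h).1
  set w : E → E := fun z => w₀ - (α z w₀ / α z e) • e with hw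
  set H := fderiv ℝ (fderiv ℝ φ) z₀ with hH
  have hsymm : H (Complex.I • w₀) w₀ = H w₀ (Complex.I • w₀) :=
    ((hφ z₀ hz₀).isSymmSndFDerivAt (by simp)).eq _ _
  obtain ⟨u, hu1, hu2⟩ : ∃ u, fderiv ℝ φ z₀ u
      = -(1 / 4) * (H w₀ w₀ - H (Complex.I • w₀) (Complex.I • w₀)) ∧
      fderiv ℝ φ z₀ (Complex.I • u) = -(1 / 2) * H w₀ (Complex.I • w₀) := by
    set c : ℂ := ⟨-(1 / 4) * (H w₀ w₀ - H (Complex.I • w₀) (Complex.I • w₀)),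
      (1 / 2) * H w₀ (Complex.I • w₀)⟩ with hc
    have h : cplx (fderiv ℝ φ z₀) ((c / α z₀ e) • e) = c := by
      rw [map_smul, smul_eq_mul]; exact div_mul_cancel₀ _ hαe
    refine ⟨(c / α z₀ e) • e, ?_, ?_⟩
    · rw [← cplx_re, h]
    · have := cplx_im (fderiv ℝ φ z₀) ((c / α z₀ e) • e)
      rw [h] at this
      simp only [hc] at this ⊢
      linarith
  have hw0 : w z₀ = w₀ := by
    have : α z₀ w₀ = 0 := cplx_eq_zero.mpr ⟨hw1, hw2⟩
    simp [hw, this]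
  have hwc : ∀ z ∈ X, α z e ≠ 0 → ContinuousAt w z := fun z hz hze =>
    continuousAt_const.sub (((hαc w₀ z hz).div (hαc e z hz) hze).smul continuousAt_const)
  have hwα : ∀ z, α z e ≠ 0 → α z (w z) = 0 := fun z hz => by
    rw [hw]; simp only [map_sub, map_smul, smul_eq_mul]
    rw [div_mul_cancel₀ _ hz, sub_self]
  -- the disc, its derivative and the second derivative of `φ` along it
  set γ : E → ℂ → ℝ → E := fun z ω s => z + (s : ℝ) • (ω • w z) + (s ^ 2 : ℝ) • (ω ^ 2 • u) with hγ
  set γ' : E → ℂ → ℝ → E := fun z ω s => ω • w z + (2 * s : ℝ) • (ω ^ 2 • u) with hγ'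
  set q : E → ℂ → ℝ → ℝ := fun z ω s =>
    fderiv ℝ (fderiv ℝ φ) (γ z ω s) (γ' z ω s) (γ' z ω s)
      + fderiv ℝ φ (γ z ω s) ((2 : ℝ) • (ω ^ 2 • u)) with hq
  have hq0 : ∀ ω : ℂ, ‖ω‖ = 1 → q z₀ ω 0 = levi φ z₀ w₀ / 2 := by
    intro ω hω
    have h1 : ω • w₀ = ω.re • w₀ + ω.im • (Complex.I • w₀) := by
      conv_lhs => rw [← Complex.re_add_im ω]
      rw [add_smul, mul_smul]; rfl
    have h2 : ω ^ 2 • u = (ω.re ^ 2 - ω.im ^ 2) • u + (2 * ω.re * ω.im) • (Complex.I • u) := by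
      have : ω ^ 2 = ((ω.re ^ 2 - ω.im ^ 2 : ℝ) : ℂ) + ((2 * ω.re * ω.im : ℝ) : ℂ) * Complex.I := by
        conv_lhs => rw [← Complex.re_add_im ω]
        push_cast
        linear_combination (ω.im ^ 2 : ℂ) * Complex.I_sq
      rw [this, add_smul, mul_smul]; rfl
    have h3 : ω.re ^ 2 + ω.im ^ 2 = 1 := by
      have := Complex.sq_norm ω
      rw [hω, Complex.normSq_apply] at this
      nlinarith
    have h4 : γ z₀ ω 0 = z₀ := by simp [hγ]
    have h5 : γ' z₀ ω 0 = ω.re • w₀ + ω.im • (Complex.I • w₀) := by simp [hγ', hw0, h1]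
    simp only [hq]
    rw [h4, h5, h2]
    simp only [map_add, map_smul, smul_eq_mul, add_apply,
      smul_apply, levi, ← hH, hu1, hu2, hsymm]
    linear_combination (1 / 2 * (H w₀ w₀ + H (Complex.I • w₀) (Complex.I • w₀))) * h3
  set c := levi φ z₀ w₀ / 4 with hc
  have hcpos : 0 < c := by positivity
  have hev : ∀ᶠ x : E × ℝ in 𝓝 (z₀, 0), ∀ ω ∈ sphere (0 : ℂ) 1,
      γ x.1 ω x.2 ∈ X ∧ c < q x.1 ω x.2 := by
    refine (isCompact_sphere (0 : ℂ) 1).eventually_forall_of_forall_eventually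
      (P := fun (x : E × ℝ) ω => γ x.1 ω x.2 ∈ X ∧ c < q x.1 ω x.2) ?_
    intro ω hω
    have hω : ‖ω‖ = 1 := by simpa using hω
    have cw : ContinuousAt (fun y : (E × ℝ) × ℂ => w y.1.1) ((z₀, 0), ω) :=
      ContinuousAt.comp (g := w) (f := fun y : (E × ℝ) × ℂ => y.1.1) (x := ((z₀, 0), ω))
        (hwc z₀ hz₀ hαe) (by fun_prop)
    have cs : ContinuousAt (fun y : (E × ℝ) × ℂ => y.1.2) ((z₀, 0), ω) := by fun_prop
    have cω : ContinuousAt (fun y : (E × ℝ) × ℂ => y.2) ((z₀, 0), ω) := by fun_prop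
    have cz : ContinuousAt (fun y : (E × ℝ) × ℂ => y.1.1) ((z₀, 0), ω) := by fun_prop
    have cu : ContinuousAt (fun y : (E × ℝ) × ℂ => y.2 ^ 2 • u) ((z₀, 0), ω) :=
      (cω.pow 2).smul continuousAt_const
    have cγ : ContinuousAt (fun y : (E × ℝ) × ℂ => γ y.1.1 y.2 y.1.2) ((z₀, 0), ω) :=
      (cz.add (cs.smul (cω.smul cw))).add ((cs.pow 2).smul cu)
    have cγ' : ContinuousAt (fun y : (E × ℝ) × ℂ => γ' y.1.1 y.2 y.1.2) ((z₀, 0), ω) :=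
      (cω.smul cw).add ((continuousAt_const.mul cs).smul cu)
    have h4 : γ z₀ ω 0 = z₀ := by simp [hγ]
    have cH : ContinuousAt (fun y : (E × ℝ) × ℂ => fderiv ℝ (fderiv ℝ φ) (γ y.1.1 y.2 y.1.2))
        ((z₀, 0), ω) :=
      ContinuousAt.comp (g := fderiv ℝ (fderiv ℝ φ)) (by simp only [h4]; exact hHc z₀ hz₀) cγ
    have cD : ContinuousAt (fun y : (E × ℝ) × ℂ => fderiv ℝ φ (γ y.1.1 y.2 y.1.2))
        ((z₀, 0), ω) :=
      ContinuousAt.comp (g := fderiv ℝ φ) (by simp only [h4]; exact hDc z₀ hz₀) cγ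
    have cq : ContinuousAt (fun y : (E × ℝ) × ℂ => q y.1.1 y.2 y.1.2) ((z₀, 0), ω) :=
      ((cH.clm_apply cγ').clm_apply cγ').add (cD.clm_apply (cu.const_smul (2 : ℝ)))
    refine (cγ.eventually_mem ?_).and (cq.eventually_const_lt ?_)
    · simp only [h4]; exact hX.mem_nhds hz₀
    · simp only [hq0 ω hω, hc]; linarith
  have hev2 : ∀ᶠ z in 𝓝 z₀, α z e ≠ 0 ∧ z ∈ X :=
    ((hαc e z₀ hz₀).eventually_ne hαe).and (hX.mem_nhds hz₀)
  rw [Metric.eventually_nhds_iff_ball] at hev hev2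
  obtain ⟨r₁, hr₁, h₁⟩ := hev
  obtain ⟨r₂, hr₂, h₂⟩ := hev2
  have key : ∀ z ∈ ball z₀ (min r₁ r₂), ∀ s : ℝ, |s| < r₁ → ∀ ω : ℂ, ‖ω‖ = 1 →
      γ z ω s ∈ X ∧ c < q z ω s := by
    intro z hz s hs ω hω
    refine h₁ (z, s) ?_ ω (by simpa using hω)
    rw [← ball_prod_same]
    exact ⟨ball_subset_ball (min_le_left _ _) hz, by simpa using hs⟩
  refine ⟨w, u, min r₁ r₂ / 2, c / 2, by positivity, by positivity, ?_, ?_⟩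
  · intro z hz
    have := h₂ z (ball_subset_ball ((half_le_self (by positivity)).trans (min_le_right _ _)) hz)
    exact (hwc z this.2 this.1).continuousWithinAt
  · intro z hz η hη
    have hz' : z ∈ ball z₀ (min r₁ r₂) := ball_subset_ball (half_le_self (by positivity)) hz
    have hz2 := h₂ z (ball_subset_ball (min_le_right _ _) hz')
    obtain ⟨ω, hω, hηω⟩ : ∃ ω : ℂ, ‖ω‖ = 1 ∧ η = (‖η‖ : ℂ) * ω := by
      by_cases h0 : η = 0
      · exact ⟨1, by simp, by simp [h0]⟩
      · refine ⟨η / ‖η‖, ?_, ?_⟩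
        · rw [norm_div, Complex.norm_real, norm_norm, div_self (norm_ne_zero_iff.mpr h0)]
        · have : (‖η‖ : ℂ) ≠ 0 := by exact_mod_cast norm_ne_zero_iff.mpr h0
          field_simp
    have hγη : γ z ω ‖η‖ = z + η • w z + η ^ 2 • u := by
      conv_rhs => rw [hηω]
      simp only [hγ]
      rw [mul_pow, mul_smul, mul_smul]
      norm_cast
    have hlt : ∀ s ∈ Set.Icc 0 ‖η‖, |s| < r₁ := fun s hs => by
      rw [abs_of_nonneg hs.1]
      have h1 := min_le_left r₁ r₂
      have h2 := hs.2
      linarith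
    have dγ : ∀ s, HasDerivAt (γ z ω) (γ' z ω s) s := by
      intro s
      have h1 := ((hasDerivAt_id s).smul_const (ω • w z)).const_add z
      have h2 := ((hasDerivAt_id s).pow 2).smul_const (ω ^ 2 • u)
      refine (h1.add h2).congr_deriv ?_
      simp [hγ']
    have dγ' : ∀ s, HasDerivAt (γ' z ω) ((2 : ℝ) • (ω ^ 2 • u)) s := by
      intro s
      have h1 := (((hasDerivAt_id s).const_mul 2).smul_const (ω ^ 2 • u)).const_add (ω • w z)
      refine h1.congr_deriv ?_
      simp
    have d1 : ∀ s ∈ Set.Icc 0 ‖η‖, HasDerivAt (fun s => φ (γ z ω s))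
        (fderiv ℝ φ (γ z ω s) (γ' z ω s)) s := fun s hs => by
      have hx := (key z hz' s (hlt s hs) ω hω).1
      exact ((hφ _ hx).differentiableAt (by norm_num)).hasFDerivAt.comp_hasDerivAt s (dγ s)
    have d2 : ∀ s ∈ Set.Icc 0 ‖η‖, HasDerivAt (fun s => fderiv ℝ φ (γ z ω s) (γ' z ω s))
        (q z ω s) s := fun s hs => by
      have hx := (key z hz' s (hlt s hs) ω hω).1
      have h1 := ((hD _ hx).differentiableAt (by norm_num)).hasFDerivAt.comp_hasDerivAt s (dγ s)
      exact h1.clm_apply (dγ' s)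
    have h0 : fderiv ℝ φ (γ z ω 0) (γ' z ω 0) = 0 := by
      have e1 : γ z ω 0 = z := by simp [hγ]
      have e2 : γ' z ω 0 = ω • w z := by simp [hγ']
      rw [e1, e2]
      exact apply_smul_of_cplx_eq_zero (hwα z hz2.1) ω
    have hfin := add_sq_le_of_deriv2_ge d1 d2 h0
      (fun s hs => (key z hz' s (hlt s hs) ω hω).2.le) (s := ‖η‖) ⟨norm_nonneg _, le_rfl⟩
    rw [hγη] at hfin
    refine ⟨hγη ▸ (key z hz' _ (hlt _ ⟨norm_nonneg _, le_rfl⟩) ω hω).1, ?_⟩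
    have e1 : γ z ω 0 = z := by simp [hγ]
    rwa [e1] at hfin

lemma exists_pushField [FiniteDimensional ℂ E] {φ : E → ℝ} {X : Set E} (hX : IsOpen X)
    (hφ : ∀ z ∈ X, ContDiffAt ℝ 2 φ z) {z₀ : E} (hz₀ : z₀ ∈ X) (hreg : Regular φ z₀) :
    ∃ (W B : E → E) (κ : E → ℝ) (C : ℝ), PushField φ X W B κ C ∧ 0 < κ z₀ := by
  have := FiniteDimensional.proper ℂ E
  obtain ⟨w, u, r, c, hr, hc, hw, h⟩ := exists_pushField_aux hX hφ hz₀ hreg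
  set χ : E → ℝ := fun z => max 0 (min 1 r / 2 - dist z z₀) with hχ
  have hχc : Continuous χ := by fun_prop
  have hχ0 : ∀ z, 0 ≤ χ z := fun z => le_max_left _ _
  have hχr : ∀ z, χ z ≤ r := fun z => by
    have : min 1 r ≤ r := min_le_right _ _
    exact max_le hr.le (by linarith [dist_nonneg (x := z) (y := z₀)])
  have hχs : ∀ z, z ∉ ball z₀ (r / 2) → χ z = 0 := fun z hz => by
    have h1 : min 1 r ≤ r := min_le_right _ _
    rw [mem_ball, not_lt] at hz
    exact max_eq_left (by linarith)
  have hWc : Continuous fun z => χ z • w z := by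
    rw [continuous_iff_continuousAt]
    intro z
    by_cases hz : dist z z₀ < r
    · exact hχc.continuousAt.smul (hw.continuousAt (isOpen_ball.mem_nhds hz))
    · have : ∀ᶠ y in 𝓝 z, (fun z => χ z • w z) y = 0 := by
        have : ∀ᶠ y in 𝓝 z, r / 2 < dist y z₀ :=
          (continuous_id.dist continuous_const).continuousAt.eventually_const_lt
            (by simp only [id]; linarith)
        filter_upwards [this] with y hy
        rw [hχs y (by simpa using hy.le), zero_smul]
      exact continuousAt_const.congr (this.mono fun y hy => hy.symm)
  have hBc : Continuous fun z => χ z ^ 2 • u := (hχc.pow 2).smul continuous_const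
  have hs : ∀ z, z ∉ closedBall z₀ r → χ z = 0 := fun z hz =>
    hχs z fun h => hz (ball_subset_closedBall (ball_subset_ball (by linarith) h))
  obtain ⟨C₁, hC₁⟩ := hWc.bounded_above_of_compact_support
    (HasCompactSupport.intro (isCompact_closedBall z₀ r) fun z hz => by simp [hs z hz])
  obtain ⟨C₂, hC₂⟩ := hBc.bounded_above_of_compact_support
    (HasCompactSupport.intro (isCompact_closedBall z₀ r) fun z hz => by simp [hs z hz])
  have e : ∀ z, ∀ η : ℂ, z + η • (χ z • w z) + η ^ 2 • (χ z ^ 2 • u)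
      = z + (η * χ z) • w z + (η * χ z) ^ 2 • u := by
    intro z η
    rw [mul_pow, mul_smul, mul_smul]
    norm_cast
  have hn : ∀ z, ∀ η : ℂ, ‖η * χ z‖ = ‖η‖ * χ z := fun z η => by
    rw [norm_mul, Complex.norm_real, Real.norm_of_nonneg (hχ0 z)]
  have main : ∀ z ∈ X, ∀ η : ℂ, ‖η‖ ≤ 1 → z + (η * χ z) • w z + (η * χ z) ^ 2 • u ∈ X ∧
      φ z + c * ‖η * χ z‖ ^ 2 ≤ φ (z + (η * χ z) • w z + (η * χ z) ^ 2 • u) := by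
    intro z hz η hη
    by_cases hzr : z ∈ ball z₀ r
    · refine h z hzr _ ?_
      rw [hn]
      calc _ ≤ 1 * χ z := mul_le_mul_of_nonneg_right hη (hχ0 z)
        _ ≤ r := by rw [one_mul]; exact hχr z
    · rw [hχs z fun h => hzr (ball_subset_ball (by linarith) h)]
      simpa using hz
  refine ⟨fun z => χ z • w z, fun z => χ z ^ 2 • u, fun z => c * χ z ^ 2, C₁ + C₂,
    ⟨hWc, hBc, by fun_prop, fun z => by positivity, fun z hz η hη => ?_, fun z hz η hη => ?_,
      fun z => add_le_add (hC₁ z) (hC₂ z)⟩, ?_⟩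
  · rw [e]; exact (main z hz η hη).1
  · rw [e]
    refine le_trans (le_of_eq ?_) (main z hz η hη).2
    rw [hn]; ring
  · have : 0 < min 1 r := lt_min one_pos hr
    have : 0 < χ z₀ := lt_max_of_lt_right (by simpa using this)
    positivity

end

section

lemma exists_uniform_nhd {E : Type*} [NormedAddCommGroup E] {X K : Set E} (hX : IsOpen X)
    {φ : E → ℝ} (hφ : ContinuousOn φ X)
    (hK : IsCompact K) (hKX : K ⊆ X) {ε : ℝ} (hε : 0 < ε) :
    ∃ δ > 0, ∀ x ∈ K, ∀ y, ‖y - x‖ < δ → y ∈ X ∧ |φ y - φ x| < ε := by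
  obtain ⟨δ₁, h₁, h₁'⟩ := hK.exists_thickening_subset_open hX hKX
  have h₂ := hK.uniformContinuousAt_of_continuousAt φ
    (fun a ha => hφ.continuousAt (hX.mem_nhds (hKX ha))) (Metric.dist_mem_uniformity hε)
  obtain ⟨δ₂, h₂, h₂'⟩ := Metric.mem_uniformity_dist.mp h₂
  refine ⟨min δ₁ δ₂, lt_min h₁ h₂, fun x hx y hy => ⟨h₁' ?_, ?_⟩⟩
  · rw [mem_thickening_iff]
    exact ⟨x, hx, by rw [dist_eq_norm]; exact hy.trans_le (min_le_left _ _)⟩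
  · have := h₂' (a := x) (b := y) (by
      rw [dist_comm, dist_eq_norm]; exact hy.trans_le (min_le_right _ _)) hx
    simpa [Real.dist_eq, abs_sub_comm] using this

variable {E : Type*} [NormedAddCommGroup E] [NormedSpace ℂ E]

/-- `f` is entire and maps the closed unit disc into `X`. -/
def Adm (X : Set E) (f : ℂ → E) : Prop :=
  Differentiable ℂ f ∧ ∀ ζ, ‖ζ‖ ≤ 1 → f ζ ∈ X

/-- `F` has the same `1`-jet at `0` as `f`, and is `ε`-close to `f` on the disc of radius `r`. -/
def JetClose (f F : ℂ → E) (r ε : ℝ) : Prop :=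
  F 0 = f 0 ∧ deriv F 0 = deriv f 0 ∧ ∀ ζ, ‖ζ‖ ≤ r → ‖F ζ - f ζ‖ < ε

lemma JetClose.refl (f : ℂ → E) (r : ℝ) {ε : ℝ} (hε : 0 < ε) : JetClose f f r ε :=
  ⟨rfl, rfl, fun ζ _ => by simpa using hε⟩

lemma JetClose.trans {f F G : ℂ → E} {r ε₁ ε₂ : ℝ} (h₁ : JetClose f F r ε₁)
    (h₂ : JetClose F G r ε₂) : JetClose f G r (ε₁ + ε₂) :=
  ⟨h₂.1.trans h₁.1, h₂.2.1.trans h₁.2.1, fun ζ hζ => by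
    have := norm_add_le (F ζ - f ζ) (G ζ - F ζ)
    rw [show F ζ - f ζ + (G ζ - F ζ) = G ζ - f ζ by abel] at this
    linarith [h₁.2.2 ζ hζ, h₂.2.2 ζ hζ]⟩

lemma JetClose.mono {f F : ℂ → E} {r r' ε ε' : ℝ} (h : JetClose f F r ε) (hr : r' ≤ r)
    (hε : ε ≤ ε') : JetClose f F r' ε' :=
  ⟨h.1, h.2.1, fun ζ hζ => (h.2.2 ζ (hζ.trans hr)).trans_le hε⟩

lemma jet_add_sq_smul {f g : ℂ → E} (hf : Differentiable ℂ f) (hg : Differentiable ℂ g) :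
    Differentiable ℂ (fun ζ => f ζ + ζ ^ 2 • g ζ) ∧ (f 0 + (0 : ℂ) ^ 2 • g 0 = f 0) ∧
      deriv (fun ζ => f ζ + ζ ^ 2 • g ζ) 0 = deriv f 0 := by
  refine ⟨by fun_prop, by simp, ?_⟩
  have h := (hf 0).hasDerivAt.add (((hasDerivAt_id (0 : ℂ)).pow 2).smul (hg 0).hasDerivAt)
  have h' : HasDerivAt (fun ζ => f ζ + ζ ^ 2 • g ζ) (deriv f 0) 0 := by
    refine h.congr_deriv ?_
    simp
  exact h'.deriv

lemma PushField.step [FiniteDimensional ℂ E] {φ : E → ℝ} {X : Set E} {W B : E → E} {κ : E → ℝ}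
    {C : ℝ} (h : PushField φ X W B κ C) (hX : IsOpen X) (hφ : ContinuousOn φ X) {f : ℂ → E}
    (hf : Adm X f) {r ε : ℝ} (hr : r < 1) (hε : 0 < ε) :
    ∃ F, Adm X F ∧ JetClose f F r ε ∧ (∀ ζ, ‖ζ‖ ≤ 1 → φ (f ζ) - ε ≤ φ (F ζ)) ∧
      (∀ ζ, ‖ζ‖ = 1 → φ (f ζ) + κ (f ζ) - ε ≤ φ (F ζ)) ∧
      ∀ ζ, ‖ζ‖ ≤ 1 → ‖F ζ - f ζ‖ ≤ C + ε := by
  have hfc : Continuous f := hf.1.continuous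
  set D : ℂ → ℂ → E := fun ζ η => f ζ + η • W (f ζ) + η ^ 2 • B (f ζ) with hD
  have hC0 : 0 ≤ C := (add_nonneg (norm_nonneg _) (norm_nonneg _)).trans (h.bound (f 0))
  set K : Set E := (fun x : ℂ × ℂ => D x.1 x.2) '' (closedBall 0 1 ×ˢ closedBall 0 1) with hKdef
  have hK : IsCompact K := by
    refine ((isCompact_closedBall 0 1).prod (isCompact_closedBall 0 1)).image ?_
    have := h.contW
    have := h.contB
    fun_prop
  have hKX : K ⊆ X := by
    rintro _ ⟨⟨ζ, η⟩, ⟨h1, h2⟩, rfl⟩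
    exact h.mem _ (hf.2 ζ (by simpa using h1)) η (by simpa using h2)
  obtain ⟨δ, hδ, hδ'⟩ := exists_uniform_nhd hX hφ hK hKX hε
  set δ₁ := min δ ε / 4 with hδ₁
  have hδ₁pos : 0 < δ₁ := by positivity
  have e1 := exists_entire_approx_smul_pow (a := fun ζ => W (f ζ)) (h.contW.comp hfc) hδ₁pos
  have e2 := exists_entire_approx_smul_pow (a := fun ζ => B (f ζ)) (h.contB.comp hfc) hδ₁pos
  have t2 : Tendsto (fun N : ℕ => 2 * N + 2) atTop atTop :=
    tendsto_atTop_mono (fun N => by simp only [id]; omega) tendsto_id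
  set r₁ := max r 0 with hr₁
  have hr₁1 : r₁ < 1 := max_lt hr one_pos
  have e3 : ∀ᶠ N : ℕ in atTop, r₁ ^ N * C < ε / 2 := by
    have := (tendsto_pow_atTop_nhds_zero_of_lt_one (le_max_right r 0) hr₁1).mul_const C
    rw [zero_mul] at this
    exact this.eventually_lt_const (by positivity)
  obtain ⟨N, ⟨p, hp, hp'⟩, ⟨q, hq, hq'⟩, hN⟩ := (e1.and ((t2.eventually e2).and e3)).exists
  obtain ⟨j1, j2, j3⟩ := jet_add_sq_smul hf.1 (hp.add hq)
  set F : ℂ → E := fun ζ => f ζ + ζ ^ 2 • (p ζ + q ζ) with hF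
  have hpow : ∀ (k : ℕ) (ζ : ℂ), ‖ζ‖ ≤ 1 → ‖ζ ^ k‖ ≤ 1 := fun k ζ hζ => by
    rw [norm_pow]; exact pow_le_one₀ (norm_nonneg _) hζ
  have happ : ∀ ζ, ‖ζ‖ ≤ 1 → ‖F ζ - D ζ (ζ ^ (N + 2))‖ ≤ 2 * δ₁ := by
    intro ζ hζ
    have e : F ζ - D ζ (ζ ^ (N + 2)) = ζ ^ 2 • ((p ζ - ζ ^ N • W (f ζ))
        + (q ζ - ζ ^ (2 * N + 2) • B (f ζ))) := by
      simp only [hF, hD]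
      rw [← pow_mul, show (N + 2) * 2 = 2 + (2 * N + 2) by ring, show N + 2 = 2 + N by ring,
        pow_add, pow_add, mul_smul, mul_smul]
      module
    rw [e, norm_smul]
    calc _ ≤ 1 * (δ₁ + δ₁) := mul_le_mul (hpow 2 ζ hζ) (norm_add_le_of_le (hp' ζ hζ) (hq' ζ hζ))
          (norm_nonneg _) zero_le_one
      _ = _ := by ring
  have hδδ : 2 * δ₁ < δ := by
    have : min δ ε ≤ δ := min_le_left _ _
    rw [hδ₁]; linarith
  have hδε : 2 * δ₁ ≤ ε / 2 := by
    have : min δ ε ≤ ε := min_le_right _ _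
    rw [hδ₁]; linarith
  have hDK : ∀ ζ, ‖ζ‖ ≤ 1 → D ζ (ζ ^ (N + 2)) ∈ K := fun ζ hζ =>
    ⟨(ζ, ζ ^ (N + 2)), ⟨by simpa using hζ, by
      rw [mem_closedBall_zero_iff]; exact hpow _ ζ hζ⟩, rfl⟩
  have hmain : ∀ ζ, ‖ζ‖ ≤ 1 → F ζ ∈ X ∧ φ (D ζ (ζ ^ (N + 2))) - ε ≤ φ (F ζ) := by
    intro ζ hζ
    have := hδ' _ (hDK ζ hζ) (F ζ) ((happ ζ hζ).trans_lt hδδ)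
    exact ⟨this.1, by linarith [(abs_lt.mp this.2).1]⟩
  have hDf : ∀ ζ, ‖ζ‖ ≤ 1 → ‖D ζ (ζ ^ (N + 2)) - f ζ‖ ≤ ‖ζ‖ ^ N * C := by
    intro ζ hζ
    have e : D ζ (ζ ^ (N + 2)) - f ζ = ζ ^ N • (ζ ^ 2 • W (f ζ) + ζ ^ (N + 4) • B (f ζ)) := by
      simp only [hD]
      rw [← pow_mul, show (N + 2) * 2 = N + (N + 4) by ring, pow_add, pow_add _ N (N + 4),
        mul_smul, mul_smul]
      module
    rw [e, norm_smul, norm_pow]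
    refine mul_le_mul_of_nonneg_left (le_trans (norm_add_le_of_le ?_ ?_) (h.bound (f ζ)))
      (by positivity)
    · rw [norm_smul]; exact mul_le_of_le_one_left (norm_nonneg _) (hpow _ ζ hζ)
    · rw [norm_smul]; exact mul_le_of_le_one_left (norm_nonneg _) (hpow _ ζ hζ)
  have htri : ∀ ζ, ‖F ζ - f ζ‖ ≤ ‖F ζ - D ζ (ζ ^ (N + 2))‖ + ‖D ζ (ζ ^ (N + 2)) - f ζ‖ :=
    fun ζ => norm_sub_le_norm_sub_add_norm_sub _ _ _
  refine ⟨F, ⟨j1, fun ζ hζ => (hmain ζ hζ).1⟩, ⟨j2, j3, fun ζ hζ => ?_⟩, fun ζ hζ => ?_,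
    fun ζ hζ => ?_, fun ζ hζ => ?_⟩
  · have hζ1 : ‖ζ‖ ≤ r₁ := hζ.trans (le_max_left _ _)
    have h1 := hDf ζ (hζ1.trans hr₁1.le)
    have h2 : ‖ζ‖ ^ N * C ≤ r₁ ^ N * C :=
      mul_le_mul_of_nonneg_right (pow_le_pow_left₀ (norm_nonneg _) hζ1 N) hC0
    linarith [htri ζ, happ ζ (hζ1.trans hr₁1.le)]
  · have h1 := h.push _ (hf.2 ζ hζ) (ζ ^ (N + 2)) (hpow _ ζ hζ)
    have h2 := h.nonneg (f ζ)
    have h3 := (hmain ζ hζ).2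
    have h4 : 0 ≤ κ (f ζ) * ‖ζ ^ (N + 2)‖ ^ 2 := by positivity
    simp only [hD] at h3
    linarith
  · have h1 := h.push _ (hf.2 ζ hζ.le) (ζ ^ (N + 2)) (hpow _ ζ hζ.le)
    have h3 := (hmain ζ hζ.le).2
    rw [norm_pow, hζ] at h1
    simp only [hD] at h3
    simp only [one_pow, mul_one] at h1
    linarith
  · have h1 : ‖ζ‖ ^ N * C ≤ 1 * C :=
      mul_le_mul_of_nonneg_right (pow_le_one₀ (norm_nonneg _) hζ) hC0
    linarith [htri ζ, happ ζ hζ, hDf ζ hζ]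

lemma exists_multi_step [FiniteDimensional ℂ E] {ι : Type*} {φ : E → ℝ} {X : Set E}
    {W B : ι → E → E} {κ : ι → E → ℝ} {C : ι → ℝ} (hX : IsOpen X) (hφ : ContinuousOn φ X)
    {d : ℝ} (t : Finset ι) (h : ∀ i ∈ t, PushField φ X (W i) (B i) (κ i) (C i))
    (hd0 : 0 < d) (hd : ∀ i ∈ t, C i ≤ d)
    {f : ℂ → E} (hf : Adm X f) {r : ℝ} (hr : r < 1) :
    ∀ ε > 0, ∃ F, Adm X F ∧ JetClose f F r ε ∧ (∀ ζ, ‖ζ‖ ≤ 1 → φ (f ζ) - ε ≤ φ (F ζ)) ∧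
      (∀ ζ, ‖ζ‖ = 1 → ∀ i ∈ t, ∃ y, ‖y - f ζ‖ ≤ t.card * (2 * d) ∧
        φ (f ζ) + κ i y - ε ≤ φ (F ζ)) ∧
      ∀ ζ, ‖ζ‖ ≤ 1 → ‖F ζ - f ζ‖ ≤ t.card * (2 * d) := by
  classical
  induction t using Finset.induction_on with
  | empty => exact fun ε hε => ⟨f, hf, JetClose.refl f r hε, fun ζ _ => by linarith, by simp,
      by simp⟩
  | insert i t hi ih =>
    intro ε hε
    obtain ⟨F, hF, hc, hb, hg, hdist⟩ := ih (fun j hj => h j (Finset.mem_insert_of_mem hj))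
      (fun j hj => hd j (Finset.mem_insert_of_mem hj)) (ε / 2) (by positivity)
    obtain ⟨G, hG, hc', hb', hg', hdist'⟩ := (h i (Finset.mem_insert_self i t)).step hX hφ hF hr
      (ε := min (ε / 2) d) (by positivity)
    have m1 : min (ε / 2) d ≤ ε / 2 := min_le_left _ _
    have m2 : min (ε / 2) d ≤ d := min_le_right _ _
    have hCi := hd i (Finset.mem_insert_self i t)
    have hcard : (((insert i t).card : ℕ) : ℝ) = t.card + 1 := by
      rw [Finset.card_insert_of_notMem hi]; push_cast; rfl
    rw [hcard]
    refine ⟨G, hG, (hc.trans hc').mono le_rfl (by linarith), fun ζ hζ => ?_, fun ζ hζ j hj => ?_,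
      fun ζ hζ => ?_⟩
    · linarith [hb ζ hζ, hb' ζ hζ]
    · rcases Finset.mem_insert.mp hj with rfl | hj
      · refine ⟨F ζ, ?_, ?_⟩
        · linarith [hdist ζ hζ.le]
        · linarith [hg' ζ hζ, hb ζ hζ.le]
      · obtain ⟨y, hy, hy'⟩ := hg ζ hζ j hj
        refine ⟨y, by linarith, ?_⟩
        linarith [hb' ζ hζ.le]
    · have := norm_sub_le_norm_sub_add_norm_sub (G ζ) (F ζ) (f ζ)
      linarith [hdist ζ hζ, hdist' ζ hζ]

lemma exists_round [FiniteDimensional ℂ E] {φ : E → ℝ} {X : Set E} (hX : IsOpen X)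
    (hφ : ∀ z ∈ X, ContDiffAt ℝ 2 φ z) {K : Set E} (hK : IsCompact K) (hKX : K ⊆ X)
    (hreg : ∀ z ∈ K, Regular φ z) :
    ∃ δ > 0, ∀ f, Adm X f → ∀ r < 1, ∀ ε > 0, ∃ F, Adm X F ∧ JetClose f F r ε ∧
      (∀ ζ, ‖ζ‖ ≤ 1 → φ (f ζ) - ε ≤ φ (F ζ)) ∧
      ∀ ζ, ‖ζ‖ = 1 → f ζ ∈ K → φ (f ζ) + δ ≤ φ (F ζ) := by
  have hφc : ContinuousOn φ X := fun z hz => (hφ z hz).continuousAt.continuousWithinAt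
  have h1 : ∀ z : K, ∃ (W B : E → E) (κ : E → ℝ) (C : ℝ), PushField φ X W B κ C ∧ 0 < κ z :=
    fun z => exists_pushField hX hφ (hKX z.2) (hreg z z.2)
  choose W B κ C hP hpos using h1
  have h2 : ∀ z : K, ∃ δ > 0, ∀ y ∈ ball (z : E) (2 * δ), κ z z / 2 < κ z y := by
    intro z
    have := ((hP z).contκ.continuousAt (x := (z : E))).eventually_const_lt
      (half_lt_self (hpos z))
    obtain ⟨δ, hδ, h⟩ := Metric.eventually_nhds_iff_ball.mp this
    exact ⟨δ / 2, by positivity, fun y hy => h y (by rwa [mul_div_cancel₀ _ two_ne_zero] at hy)⟩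
  choose ρ hρ hρ' using h2
  obtain ⟨t, ht⟩ := hK.elim_finite_subcover (fun z : K => ball (z : E) (ρ z))
    (fun z => isOpen_ball) (fun z hz => Set.mem_iUnion.mpr ⟨⟨z, hz⟩, mem_ball_self (hρ _)⟩)
  have e1 : ∀ᶠ μ : ℝ in 𝓝[>] 0, ∀ i ∈ t, μ < κ i i / 2 ∧ μ < ρ i := by
    rw [Filter.eventually_all_finset]
    intro i _
    exact ((gt_mem_nhds (half_pos (hpos i))).filter_mono nhdsWithin_le_nhds).and
      ((gt_mem_nhds (hρ i)).filter_mono nhdsWithin_le_nhds)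
  obtain ⟨μ, hμ, hμ0⟩ := (e1.and self_mem_nhdsWithin).exists
  replace hμ0 : 0 < μ := hμ0
  set d := μ / (2 * (t.card + 1)) with hd
  have hd0 : 0 < d := by positivity
  have e2 : ∀ᶠ s : ℝ in 𝓝[>] 0, ∀ i ∈ t, s * C i < d := by
    rw [Filter.eventually_all_finset]
    intro i _
    have : Tendsto (fun s : ℝ => s * C i) (𝓝 0) (𝓝 (0 * C i)) := tendsto_id.mul_const _
    rw [zero_mul] at this
    exact (this.eventually_lt_const hd0).filter_mono nhdsWithin_le_nhds
  obtain ⟨s, ⟨hs, hs1⟩, hs0⟩ := ((e2.and ((gt_mem_nhds one_pos).filter_mono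
    nhdsWithin_le_nhds)).and self_mem_nhdsWithin).exists
  replace hs0 : 0 < s := hs0
  refine ⟨s ^ 2 * μ / 2, by positivity, fun f hf r hr ε hε => ?_⟩
  obtain ⟨F, hF, hc, hb, hg, -⟩ := exists_multi_step hX hφc t
    (fun i _ => (hP i).scale hs0.le hs1.le) hd0 (fun i hi => (hs i hi).le) hf hr
    (min ε (s ^ 2 * μ / 2)) (by positivity)
  have m1 : min ε (s ^ 2 * μ / 2) ≤ ε := min_le_left _ _
  have m2 : min ε (s ^ 2 * μ / 2) ≤ s ^ 2 * μ / 2 := min_le_right _ _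
  refine ⟨F, hF, hc.mono le_rfl m1, fun ζ hζ => by linarith [hb ζ hζ], fun ζ hζ hfK => ?_⟩
  obtain ⟨i, hi, hfi⟩ := Set.mem_iUnion₂.mp (ht hfK)
  obtain ⟨y, hy, hy'⟩ := hg ζ hζ i hi
  have h3 : (t.card : ℝ) * (2 * d) < μ := by
    rw [hd]
    have : (t.card : ℝ) * (2 * (μ / (2 * (t.card + 1)))) = μ * (t.card / (t.card + 1)) := by
      field_simp
    rw [this]
    have : (t.card : ℝ) / (t.card + 1) < 1 := by rw [div_lt_one (by positivity)]; linarith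
    nlinarith
  have h4 : y ∈ ball (i : E) (2 * ρ i) := by
    rw [mem_ball] at hfi ⊢
    have := dist_triangle y (f ζ) i
    rw [dist_eq_norm y (f ζ)] at this
    linarith [(hμ i hi).2]
  have h5 := hρ' i y h4
  have h6 : s ^ 2 * μ ≤ s ^ 2 * κ i y :=
    mul_le_mul_of_nonneg_left (by linarith [(hμ i hi).1]) (sq_nonneg s)
  linarith

/-- Discs whose boundary lies above level `a` can be pushed above level `b` if there are only
regular points in between. -/
lemma exists_lift_of_regular [FiniteDimensional ℂ E] {φ : E → ℝ} {X : Set E} (hX : IsOpen X)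
    (hφ : ∀ z ∈ X, ContDiffAt ℝ 2 φ z) {a b b' : ℝ} (hab : a ≤ b) (hbb' : b < b')
    (hK : IsCompact {z ∈ X | a ≤ φ z ∧ φ z ≤ b'})
    (hreg : ∀ z ∈ X, a ≤ φ z → φ z ≤ b' → Regular φ z)
    {f : ℂ → E} (hf : Adm X f) (hfa : ∀ ζ, ‖ζ‖ = 1 → a ≤ φ (f ζ)) {r ε : ℝ} (hr : r < 1)
    (hε : 0 < ε) :
    ∃ F, Adm X F ∧ JetClose f F r ε ∧ (∀ ζ, ‖ζ‖ ≤ 1 → φ (f ζ) - ε ≤ φ (F ζ)) ∧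
      ∀ ζ, ‖ζ‖ = 1 → b ≤ φ (F ζ) := by
  obtain ⟨δ, hδ, h⟩ := exists_round hX hφ hK (fun z hz => hz.1)
    (fun z hz => hreg z hz.1 hz.2.1 hz.2.2)
  have key : ∀ k : ℕ, ∀ ε > 0, ∃ F, Adm X F ∧ JetClose f F r ε ∧
      (∀ ζ, ‖ζ‖ ≤ 1 → φ (f ζ) - ε ≤ φ (F ζ)) ∧
      ∀ ζ, ‖ζ‖ = 1 → min (a + k * δ) b ≤ φ (F ζ) := by
    intro k
    induction k with
    | zero =>
      exact fun ε hε => ⟨f, hf, JetClose.refl f r hε, fun ζ _ => by linarith, fun ζ hζ =>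
        (min_le_left _ _).trans (by simpa using hfa ζ hζ)⟩
    | succ k ih =>
      intro ε hε
      obtain ⟨F, hF, hc, hb, hg⟩ := ih (ε / 2) (by positivity)
      obtain ⟨G, hG, hc', hb', hg'⟩ := h F hF r hr (min (ε / 2) (b' - b))
        (lt_min (by positivity) (by linarith))
      have m1 : min (ε / 2) (b' - b) ≤ ε / 2 := min_le_left _ _
      have m2 : min (ε / 2) (b' - b) ≤ b' - b := min_le_right _ _
      refine ⟨G, hG, (hc.trans hc').mono le_rfl (by linarith), fun ζ hζ => ?_, fun ζ hζ => ?_⟩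
      · linarith [hb ζ hζ, hb' ζ hζ]
      · have h1 := hg ζ hζ
        have h2 : a ≤ min (a + k * δ) b :=
          le_min (by nlinarith [(Nat.cast_nonneg k : (0:ℝ) ≤ k)]) hab
        rcases le_or_gt (φ (F ζ)) b' with h3 | h3
        · have h4 := hg' ζ hζ ⟨hF.2 ζ hζ.le, h2.trans h1, h3⟩
          push_cast
          rcases le_total (a + k * δ) b with h5 | h5
          · rw [min_eq_left h5] at h1
            exact (min_le_left _ _).trans (by linarith)
          · rw [min_eq_right h5] at h1
            exact (min_le_right _ _).trans (by linarith)
        · exact (min_le_right _ _).trans (by linarith [hb' ζ hζ.le])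
  obtain ⟨k, hk⟩ := exists_nat_ge ((b - a) / δ)
  obtain ⟨F, hF, hc, hb, hg⟩ := key k ε hε
  refine ⟨F, hF, hc, hb, fun ζ hζ => ?_⟩
  rw [div_le_iff₀ hδ] at hk
  have := hg ζ hζ
  rwa [min_eq_right (by linarith)] at this

end

section

lemma exists_bound_deriv_of_locally_const {f : ℝ → ℝ} (hf : ContDiff ℝ 1 f)
    (h0 : ∀ x < 0, ∀ᶠ y in 𝓝 x, f y = f x) (h1 : ∀ x > 1, ∀ᶠ y in 𝓝 x, f y = f x) :
    (∀ x, x ∉ Set.Icc (0 : ℝ) 1 → deriv f x = 0) ∧ ∃ K, ∀ x, |deriv f x| ≤ K := by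
  have h : ∀ x, x ∉ Set.Icc (0 : ℝ) 1 → deriv f x = 0 := by
    intro x hx
    rw [Set.mem_Icc, not_and_or, not_le, not_le] at hx
    have : f =ᶠ[𝓝 x] fun _ => f x := hx.elim (h0 x) (h1 x)
    rw [this.deriv_eq, deriv_const]
  exact ⟨h, (hf.continuous_deriv le_rfl).bounded_above_of_compact_support
    (HasCompactSupport.intro isCompact_Icc h)⟩

/-- A smooth cutoff function with arbitrarily small logarithmic derivatives. -/
lemma exists_log_cutoff {δ R : ℝ} (hδ : 0 < δ) (hR : 0 < R) :
    ∃ τ > 0, ∃ g g' g'' : ℝ → ℝ, (∀ t, HasDerivAt g (g' t) t) ∧ (∀ t, HasDerivAt g' (g'' t) t) ∧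
      ContDiff ℝ 2 g ∧ (∀ t, 0 ≤ g t) ∧ (∀ t, g t ≤ 1) ∧ g 0 = 1 ∧ (∀ t ≥ R, g t = 0) ∧
      (∀ t, g' t ≤ 0) ∧ (∀ t < τ, g' t = 0 ∧ g'' t = 0) ∧
      (∀ t > 0, |t * g' t| ≤ δ ∧ |t ^ 2 * g'' t| ≤ δ) := by
  set S := Real.smoothTransition with hS
  have hSc : ContDiff ℝ 3 S := Real.smoothTransition.contDiff
  have hS0 : ∀ x < 0, ∀ᶠ y in 𝓝 x, S y = S x := fun x hx => by
    filter_upwards [gt_mem_nhds hx] with y hy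
    rw [hS, Real.smoothTransition.zero_of_nonpos hy.le, Real.smoothTransition.zero_of_nonpos hx.le]
  have hS1 : ∀ x > 1, ∀ᶠ y in 𝓝 x, S y = S x := fun x hx => by
    filter_upwards [lt_mem_nhds hx] with y hy
    rw [hS, Real.smoothTransition.one_of_one_le hy.le, Real.smoothTransition.one_of_one_le hx.le]
  have hS'c : ContDiff ℝ 2 (deriv S) := ((contDiff_succ_iff_deriv (n := 2)).mp hSc).2.2
  obtain ⟨hz, K₁, hK₁⟩ := exists_bound_deriv_of_locally_const (hSc.of_le (by norm_num)) hS0 hS1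
  have hloc : ∀ x, x ∉ Set.Icc (0 : ℝ) 1 → ∀ᶠ y in 𝓝 x, deriv S y = deriv S x := by
    intro x hx
    filter_upwards [isClosed_Icc.isOpen_compl.mem_nhds hx] with y hy
    rw [hz x hx, hz y hy]
  obtain ⟨hz', K₂, hK₂⟩ := exists_bound_deriv_of_locally_const (hS'c.of_le (by norm_num))
    (fun x hx => hloc x (fun h => absurd h.1 (not_le.mpr hx)))
    (fun x hx => hloc x (fun h => absurd h.2 (not_le.mpr hx)))
  have hK₁0 : 0 ≤ K₁ := (abs_nonneg _).trans (hK₁ 0)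
  have hK₂0 : 0 ≤ K₂ := (abs_nonneg _).trans (hK₂ 0)
  set e : ℝ := min 1 (δ / (K₁ + K₂ + 1)) with he
  have he0 : 0 < e := by positivity
  have he1 : e ≤ 1 := min_le_left _ _
  have heδ : e * (K₁ + K₂ + 1) ≤ δ := by
    have : e ≤ δ / (K₁ + K₂ + 1) := min_le_right _ _
    rwa [le_div_iff₀ (by positivity)] at this
  set u : ℝ → ℝ := fun t => 1 + e * Real.log (t / R) with hu
  set τ := R * Real.exp (-1 / e) with hτ
  have hτ0 : 0 < τ := by positivity
  have hu0 : ∀ t, 0 < t → t ≤ τ → u t ≤ 0 := by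
    intro t ht htτ
    have h1 : Real.log (t / R) ≤ -1 / e := by
      rw [Real.log_le_iff_le_exp (by positivity), div_le_iff₀ hR, mul_comm]
      exact htτ
    have h2 : e * Real.log (t / R) ≤ e * (-1 / e) := mul_le_mul_of_nonneg_left h1 he0.le
    rw [mul_div_cancel₀ _ he0.ne'] at h2
    simp only [hu]; linarith
  have hu1 : ∀ t ≥ R, 1 ≤ u t := by
    intro t ht
    have : 0 ≤ Real.log (t / R) := Real.log_nonneg (by rwa [le_div_iff₀ hR, one_mul])
    simp only [hu]; nlinarith
  have hud : ∀ t > 0, HasDerivAt u (e / t) t := by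
    intro t ht
    have h1 : HasDerivAt (fun t : ℝ => t / R) (1 / R) t := (hasDerivAt_id t).div_const R
    have := ((h1.log (by positivity)).const_mul e).const_add 1
    refine this.congr_deriv ?_
    field_simp
  set g : ℝ → ℝ := fun t => if t ≤ 0 then 1 else 1 - S (u t) with hg
  set g' : ℝ → ℝ := fun t => if t ≤ 0 then 0 else -(deriv S (u t) * (e / t)) with hg'
  set g'' : ℝ → ℝ := fun t => if t ≤ 0 then 0 else
    -(deriv (deriv S) (u t) * (e / t) * (e / t) + deriv S (u t) * (-e / t ^ 2)) with hg''
  have dS0 : ∀ x ≤ 0, deriv S x = 0 := by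
    intro x hx
    rcases hx.lt_or_eq with h | rfl
    · exact hz x fun h' => absurd h'.1 (not_le.mpr h)
    · refine tendsto_nhds_unique (f := deriv S) (l := 𝓝[<] 0)
        (hS'c.continuous.continuousAt.mono_left nhdsWithin_le_nhds) ?_
      refine tendsto_const_nhds.congr' ?_
      filter_upwards [self_mem_nhdsWithin] with y hy
      exact (hz y fun h' => absurd h'.1 (not_le.mpr hy)).symm
  have ddS0 : ∀ x < 0, deriv (deriv S) x = 0 := fun x h =>
    hz' x fun h' => absurd h'.1 (not_le.mpr h)
  have hgτ : ∀ t ≤ τ, g t = 1 := by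
    intro t ht
    simp only [hg]
    split_ifs with h
    · rfl
    · rw [hS, Real.smoothTransition.zero_of_nonpos (hu0 t (not_le.mp h) ht), sub_zero]
  have hg'τ : ∀ t ≤ τ, g' t = 0 := by
    intro t ht
    simp only [hg']
    split_ifs with h
    · rfl
    · rw [dS0 _ (hu0 t (not_le.mp h) ht)]; simp
  have hg1 : ∀ t > 0, g =ᶠ[𝓝 t] fun t => 1 - S (u t) := fun t ht => by
    filter_upwards [lt_mem_nhds ht] with s hs
    simp [hg, not_le.mpr hs]
  have hg'1 : ∀ t > 0, g' =ᶠ[𝓝 t] fun t => -(deriv S (u t) * (e / t)) := fun t ht => by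
    filter_upwards [lt_mem_nhds ht] with s hs
    simp [hg', not_le.mpr hs]
  have D1 : ∀ t, HasDerivAt g (g' t) t := by
    intro t
    rcases lt_or_ge t τ with h | h
    · have : g =ᶠ[𝓝 t] fun _ => 1 := by
        filter_upwards [gt_mem_nhds h] with s hs using hgτ s hs.le
      rw [hg'τ t h.le]
      exact (hasDerivAt_const t 1).congr_of_eventuallyEq this
    · have ht : 0 < t := hτ0.trans_le h
      refine HasDerivAt.congr_of_eventuallyEq ?_ (hg1 t ht)
      have hd : HasDerivAt S (deriv S (u t)) (u t) :=
        (hSc.differentiable (by norm_num)).differentiableAt.hasDerivAt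
      refine ((hd.comp t (hud t ht)).const_sub 1).congr_deriv ?_
      simp [hg', not_le.mpr ht]
  have D2' : ∀ t > 0, HasDerivAt g' (g'' t) t := by
    intro t ht
    refine HasDerivAt.congr_of_eventuallyEq ?_ (hg'1 t ht)
    have hd : HasDerivAt (deriv S) (deriv (deriv S) (u t)) (u t) :=
      (hS'c.differentiable (by norm_num)).differentiableAt.hasDerivAt
    have hi : HasDerivAt (fun t : ℝ => e / t) (-e / t ^ 2) t := by
      have := (hasDerivAt_inv ht.ne').const_mul e
      refine (this.congr_deriv ?_)
      rw [mul_neg, ← div_eq_mul_inv, neg_div]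
    refine ((hd.comp t (hud t ht)).mul hi).neg.congr_deriv ?_
    simp [hg'', not_le.mpr ht]
  have Z2 : ∀ t < τ, HasDerivAt g' 0 t := fun t h => by
    have : g' =ᶠ[𝓝 t] fun _ => 0 := by
      filter_upwards [gt_mem_nhds h] with s hs using hg'τ s hs.le
    exact (hasDerivAt_const t 0).congr_of_eventuallyEq this
  have Z3 : ∀ t < τ, g'' t = 0 := fun t h => by
    rcases le_or_gt t 0 with h' | h'
    · simp [hg'', h']
    · exact (D2' t h').unique (Z2 t h)
  have D2 : ∀ t, HasDerivAt g' (g'' t) t := fun t => by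
    rcases lt_or_ge t τ with h | h
    · rw [Z3 t h]; exact Z2 t h
    · exact D2' t (hτ0.trans_le h)
  refine ⟨τ, hτ0, g, g', g'', D1, D2, ?_, ?_, ?_, hgτ 0 hτ0.le, ?_, ?_,
    fun t ht => ⟨hg'τ t ht.le, Z3 t ht⟩, ?_⟩
  · rw [contDiff_iff_contDiffAt]
    intro t
    rcases lt_or_ge t τ with h | h
    · have : g =ᶠ[𝓝 t] fun _ => 1 := by
        filter_upwards [gt_mem_nhds h] with s hs using hgτ s hs.le
      exact contDiffAt_const.congr_of_eventuallyEq this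
    · have ht : 0 < t := hτ0.trans_le h
      refine ContDiffAt.congr_of_eventuallyEq ?_ (hg1 t ht)
      have hl : ContDiffAt ℝ 2 u t :=
        contDiffAt_const.add (contDiffAt_const.mul ((contDiffAt_id.div_const R).log
          (by simp only [id]; positivity)))
      exact contDiffAt_const.sub ((hSc.of_le (by norm_num)).contDiffAt.comp t hl)
  · intro t
    simp only [hg]
    split_ifs
    · exact zero_le_one
    · exact sub_nonneg.mpr (Real.smoothTransition.le_one _)
  · intro t
    simp only [hg]
    split_ifs
    · exact le_rfl
    · linarith [Real.smoothTransition.nonneg (u t)]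
  · intro t ht
    simp only [hg]
    rw [if_neg (not_le.mpr (hR.trans_le ht)), hS, Real.smoothTransition.one_of_one_le (hu1 t ht),
      sub_self]
  · intro t
    simp only [hg']
    split_ifs with h
    · exact le_rfl
    · have h1 : 0 ≤ deriv S (u t) := Real.smoothTransition.monotone.deriv_nonneg
      have h2 := not_le.mp h
      have : 0 ≤ e / t := by positivity
      nlinarith [mul_nonneg h1 this]
  · intro t ht
    have n1 := hK₁ (u t)
    have n2 := hK₂ (u t)
    constructor
    · have : t * g' t = -(e * deriv S (u t)) := by
        simp only [hg', if_neg (not_le.mpr ht)]; field_simp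
      rw [this, abs_neg, abs_mul, abs_of_pos he0]
      nlinarith
    · have : t ^ 2 * g'' t = -(e ^ 2 * deriv (deriv S) (u t)) + e * deriv S (u t) := by
        simp only [hg'', if_neg (not_le.mpr ht)]; field_simp; ring
      rw [this]
      refine (abs_add_le _ _).trans ?_
      rw [abs_neg, abs_mul, abs_mul, abs_of_pos he0, abs_of_nonneg (sq_nonneg e)]
      have : e ^ 2 * |deriv (deriv S) (u t)| ≤ e * K₂ :=
        mul_le_mul (by nlinarith) n2 (abs_nonneg _) he0.le
      nlinarith

end

section

section Quadratic

variable {E : Type*} [NormedAddCommGroup E] [NormedSpace ℝ E] [FiniteDimensional ℝ E]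

lemma exists_pos_mul_norm_sq_le {q : E → ℝ} (hq : Continuous q)
    (hq2 : ∀ (c : ℝ) v, q (c • v) = c ^ 2 * q v) (V : Submodule ℝ E)
    (hpos : ∀ v ∈ V, v ≠ 0 → 0 < q v) : ∃ m > 0, ∀ v ∈ V, m * ‖v‖ ^ 2 ≤ q v := by
  have := FiniteDimensional.proper ℝ E
  have hK : IsCompact (sphere (0 : E) 1 ∩ V) :=
    (isCompact_sphere 0 1).inter_right V.closed_of_finiteDimensional
  have hK1 : ∀ v ∈ sphere (0 : E) 1 ∩ V, 0 < q v := fun v hv =>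
    hpos v hv.2 (norm_ne_zero_iff.mp (by rw [mem_sphere_zero_iff_norm.mp hv.1]; norm_num))
  obtain ⟨m, hm, hm'⟩ : ∃ m > 0, ∀ v ∈ sphere (0 : E) 1 ∩ V, m ≤ q v := by
    rcases (sphere (0 : E) 1 ∩ V).eq_empty_or_nonempty with h | h
    · exact ⟨1, one_pos, by simp [h]⟩
    · obtain ⟨x, hx, hx'⟩ := hK.exists_isMinOn h hq.continuousOn
      exact ⟨q x, hK1 x hx, fun v hv => hx' hv⟩
  refine ⟨m, hm, fun v hv => ?_⟩
  by_cases h : v = 0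
  · have := hq2 0 0
    simp at this
    simp [h, this]
  · have hn : 0 < ‖v‖ := norm_pos_iff.mpr h
    have h1 := hm' (‖v‖⁻¹ • v) ⟨by
      rw [mem_sphere_zero_iff_norm, norm_smul, norm_inv, norm_norm, inv_mul_cancel₀ hn.ne'],
      V.smul_mem _ hv⟩
    rw [hq2, inv_pow, ← div_eq_inv_mul, le_div_iff₀ (by positivity)] at h1
    exact h1

lemma exists_abs_form {H : E →L[ℝ] E →L[ℝ] ℝ} (hs : ∀ v w, H v w = H w v)
    (hn : ∀ v, H v = 0 → v = 0) :
    ∃ (Q : E →L[ℝ] E →L[ℝ] ℝ) (σ : E →L[ℝ] E) (m : ℝ), 0 < m ∧ (∀ v w, Q v w = Q w v) ∧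
      (∀ v, m * ‖v‖ ^ 2 ≤ Q v v) ∧ (∀ v, |H v v| ≤ Q v v) ∧ (∀ v, H v (σ v) = Q v v) ∧
      (∀ v, Q v (σ v) = H v v) ∧ ∀ v, Q v v + H v v = 0 → Q v + H v = 0 := by
  set B : LinearMap.BilinForm ℝ E :=
    (ContinuousLinearMap.coeLM ℝ).comp (H : E →ₗ[ℝ] E →L[ℝ] ℝ) with hB
  have hBH : ∀ v w, B v w = H v w := fun _ _ => rfl
  obtain ⟨b, hb⟩ := LinearMap.BilinForm.exists_orthogonal_basis (B := B) ⟨fun v w => by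
    simpa [hBH] using hs v w⟩
  set c : Fin (Module.finrank ℝ E) → E →L[ℝ] ℝ := fun i =>
    LinearMap.toContinuousLinearMap (b.coord i) with hc
  set h : Fin (Module.finrank ℝ E) → ℝ := fun i => H (b i) (b i) with hh
  have hcb : ∀ i j, c i (b j) = if j = i then 1 else 0 := fun i j => by
    simp [hc, Finsupp.single_apply]
  have hsum : ∀ v, v = ∑ i, c i v • b i := fun v => (b.sum_repr v).symm
  have hH1 : ∀ i w, H (b i) w = h i * c i w := by
    intro i w
    conv_lhs => rw [hsum w]
    rw [map_sum, Finset.sum_eq_single i]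
    · simp [hh, mul_comm]
    · intro j _ hj
      have : H (b i) (b j) = 0 := hb hj.symm
      simp [this]
    · simp
  have hH2 : ∀ v w, H v w = ∑ i, h i * c i v * c i w := by
    intro v w
    conv_lhs => rw [hsum v]
    rw [map_sum]
    simp only [map_smul, sum_apply, smul_apply, hH1, smul_eq_mul]
    exact Finset.sum_congr rfl fun i _ => by ring
  have hh0 : ∀ i, h i ≠ 0 := by
    intro i hi
    refine b.ne_zero i (hn _ ?_)
    ext w
    rw [hH1, hi]; simp
  set Q : E →L[ℝ] E →L[ℝ] ℝ := ∑ i, (c i).smulRight (|h i| • c i) with hQ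
  have hQ2 : ∀ v w, Q v w = ∑ i, |h i| * c i v * c i w := by
    intro v w
    simp only [hQ, sum_apply, ContinuousLinearMap.smulRight_apply,
      smul_apply, smul_eq_mul]
    exact Finset.sum_congr rfl fun i _ => by ring
  set σ : E →L[ℝ] E := ∑ i, (c i).smulRight ((SignType.sign (h i) : ℝ) • b i) with hσ
  have hcσ : ∀ i v, c i (σ v) = (SignType.sign (h i) : ℝ) * c i v := by
    intro i v
    simp only [hσ, sum_apply, ContinuousLinearMap.smulRight_apply, map_sum,
      map_smul, hcb, smul_eq_mul]
    rw [Finset.sum_eq_single i]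
    · simp [mul_comm]
    · intro j _ hj; simp [hj]
    · simp
  obtain ⟨m, hm, hm'⟩ := exists_pos_mul_norm_sq_le (q := fun v => Q v v) (by fun_prop)
    (fun r v => by simp only [map_smul, smul_apply, smul_eq_mul]; ring) ⊤ (by
      intro v _ hv
      rw [hQ2]
      have h0 : ∀ i ∈ Finset.univ, 0 ≤ |h i| * c i v * c i v := fun i _ => by
        rw [mul_assoc]; exact mul_nonneg (abs_nonneg _) (mul_self_nonneg _)
      refine (Finset.sum_nonneg h0).lt_of_ne fun h1 => hv ?_
      rw [eq_comm, Finset.sum_eq_zero_iff_of_nonneg h0] at h1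
      rw [hsum v]
      refine Finset.sum_eq_zero fun i hi => ?_
      have := h1 i hi
      rw [mul_assoc, mul_eq_zero, abs_eq_zero, mul_self_eq_zero] at this
      rw [this.resolve_left (hh0 i), zero_smul])
  refine ⟨Q, σ, m, hm, fun v w => ?_, fun v => hm' v trivial, fun v => ?_, fun v => ?_,
    fun v => ?_, fun v hv => ?_⟩
  · rw [hQ2, hQ2]; exact Finset.sum_congr rfl fun i _ => by ring
  · rw [hQ2, hH2]
    refine (Finset.abs_sum_le_sum_abs _ _).trans (Finset.sum_le_sum fun i _ => ?_)
    rw [mul_assoc, abs_mul, mul_assoc, abs_of_nonneg (mul_self_nonneg (c i v))]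
  · rw [hQ2, hH2]
    refine Finset.sum_congr rfl fun i _ => ?_
    rw [hcσ, ← sign_mul_self (h i)]; ring
  · rw [hQ2, hH2]
    refine Finset.sum_congr rfl fun i _ => ?_
    rw [hcσ]
    conv_rhs => rw [← sign_mul_abs (h i)]
    ring
  · rw [hQ2, hH2, ← Finset.sum_add_distrib] at hv
    have h0 : ∀ i ∈ Finset.univ, 0 ≤ |h i| * c i v * c i v + h i * c i v * c i v := fun i _ => by
      have h1 : 0 ≤ |h i| + h i := by linarith [neg_abs_le (h i)]
      nlinarith [mul_nonneg h1 (mul_self_nonneg (c i v))]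
    rw [Finset.sum_eq_zero_iff_of_nonneg h0] at hv
    ext w
    rw [add_apply, hQ2, hH2, ← Finset.sum_add_distrib]
    refine Finset.sum_eq_zero fun i hi => ?_
    have h1 : (|h i| + h i) * (c i v * c i v) = 0 := by rw [← hv i hi]; ring
    rcases mul_eq_zero.mp h1 with h2 | h2
    · rw [← add_mul, ← add_mul, h2]; simp
    · rw [mul_self_eq_zero.mp h2]; simp

omit [FiniteDimensional ℝ E] in
lemma exists_taylor_bounds {φ : E → ℝ} {X : Set E} (hX : IsOpen X)
    (hφ : ∀ z ∈ X, ContDiffAt ℝ 2 φ z) {z₀ : E} (hz₀ : z₀ ∈ X) (hcrit : fderiv ℝ φ z₀ = 0)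
    {H : E →L[ℝ] E →L[ℝ] ℝ} (hH : fderiv ℝ (fderiv ℝ φ) z₀ = H) {η : ℝ} (hη : 0 < η) :
    ∃ R > 0, ∀ v, ‖v‖ ≤ R → z₀ + v ∈ X ∧
      (∀ x y, |fderiv ℝ (fderiv ℝ φ) (z₀ + v) x y - H x y| ≤ η * ‖x‖ * ‖y‖) ∧
      (∀ x, |fderiv ℝ φ (z₀ + v) x - H v x| ≤ η * ‖v‖ * ‖x‖) ∧
      |φ (z₀ + v) - φ z₀ - H v v / 2| ≤ η * ‖v‖ ^ 2 := by
  have hD : ContDiffAt ℝ 1 (fderiv ℝ φ) z₀ := (hφ z₀ hz₀).fderiv_right (by norm_num)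
  have hHc : ContinuousAt (fderiv ℝ (fderiv ℝ φ)) z₀ :=
    (hD.fderiv_right (m := 0) (by norm_num)).continuousAt
  have hsymm : ∀ v w, H v w = H w v := fun v w => by
    rw [← hH]; exact ((hφ z₀ hz₀).isSymmSndFDerivAt (by simp)).eq v w
  have e1 : ∀ᶠ z in 𝓝 z₀, ‖fderiv ℝ (fderiv ℝ φ) z - H‖ < η := by
    have h3 := hHc.eventually_mem (Metric.ball_mem_nhds (fderiv ℝ (fderiv ℝ φ) z₀) hη)
    filter_upwards [h3] with y hy
    rw [← hH]
    exact lt_of_eq_of_lt (dist_eq_norm (fderiv ℝ (fderiv ℝ φ) y) (fderiv ℝ (fderiv ℝ φ) z₀)).symm hy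
  have e2 : ∀ᶠ z in 𝓝 z₀, ‖fderiv ℝ φ z - fderiv ℝ φ z₀ - H (z - z₀)‖ ≤ η * ‖z - z₀‖ := by
    have := (hD.differentiableAt (by norm_num)).hasFDerivAt.isLittleO.def hη
    rwa [hH] at this
  obtain ⟨R, hR, h⟩ := Metric.eventually_nhds_iff_ball.mp (e1.and (e2.and (hX.mem_nhds hz₀)))
  have h' : ∀ v, ‖v‖ ≤ R / 2 → z₀ + v ∈ X ∧ ‖fderiv ℝ (fderiv ℝ φ) (z₀ + v) - H‖ ≤ η ∧
      ‖fderiv ℝ φ (z₀ + v) - H v‖ ≤ η * ‖v‖ := by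
    intro v hv
    have := h (z₀ + v) (by rw [mem_ball, dist_eq_norm, add_sub_cancel_left]; linarith)
    rw [hcrit, sub_zero, add_sub_cancel_left] at this
    exact ⟨this.2.2, this.1.le, this.2.1⟩
  refine ⟨R / 2, by positivity, fun v hv => ⟨(h' v hv).1, fun x y => ?_, fun x => ?_, ?_⟩⟩
  · exact ((fderiv ℝ (fderiv ℝ φ) (z₀ + v) - H).le_opNorm₂ x y).trans
      (by gcongr; exact (h' v hv).2.1)
  · exact ((fderiv ℝ φ (z₀ + v) - H v).le_opNorm x).trans (by gcongr; exact (h' v hv).2.2)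
  have hder : ∀ x ∈ closedBall (0 : E) ‖v‖, HasFDerivWithinAt
      (fun x => φ (z₀ + x) - H x x / 2) (fderiv ℝ φ (z₀ + x) - H x) (closedBall 0 ‖v‖) x := by
    intro x hx
    have hx' : ‖x‖ ≤ R / 2 := (mem_closedBall_zero_iff.mp hx).trans hv
    have d1 : HasFDerivAt (fun x => φ (z₀ + x)) (fderiv ℝ φ (z₀ + x)) x := by
      have := ((hφ _ (h' x hx').1).differentiableAt (by norm_num)).hasFDerivAt.comp x
        ((hasFDerivAt_id x).const_add z₀)
      exact this
    have d2 : HasFDerivAt (fun x => H x x / 2) (H x) x := by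
      have := (H.hasFDerivAt (x := x)).clm_apply (hasFDerivAt_id x)
      have := this.const_mul (1 / 2)
      refine (this.congr_of_eventuallyEq (Eventually.of_forall fun y => ?_)).congr_fderiv ?_
      · simp; ring
      · ext w
        simp [hsymm w x]
        ring
    exact (d1.sub d2).hasFDerivWithinAt
  have hb : ∀ x ∈ closedBall (0 : E) ‖v‖, ‖fderiv ℝ φ (z₀ + x) - H x‖ ≤ η * ‖v‖ := by
    intro x hx
    have hx1 := mem_closedBall_zero_iff.mp hx
    exact (h' x (hx1.trans hv)).2.2.trans (by gcongr)
  have := (convex_closedBall (0 : E) ‖v‖).norm_image_sub_le_of_norm_hasFDerivWithin_le hder hb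
    (mem_closedBall_self (norm_nonneg v)) (show v ∈ closedBall (0 : E) ‖v‖ by simp)
  simp only [Real.norm_eq_abs, add_zero, map_zero, zero_div, sub_zero] at this
  calc _ = |φ (z₀ + v) - H v v / 2 - φ z₀| := by congr 1; ring
    _ ≤ _ := this
    _ = _ := by ring

end Quadratic

lemma finrank_ker_add_two_le {E : Type*} [NormedAddCommGroup E] [NormedSpace ℂ E]
    [FiniteDimensional ℂ E] {V : Submodule ℂ E} (hV : Module.finrank ℂ V = 2)
    {𝓔 : Submodule ℝ E} (h : ∀ w ∈ V, w ∈ 𝓔 → Complex.I • w ∈ 𝓔 → w = 0) :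
    Module.finrank ℝ 𝓔 + 2 ≤ Module.finrank ℝ E := by
  set π := 𝓔.mkQ
  set J : E →ₗ[ℝ] E := (Complex.I • (LinearMap.id : E →ₗ[ℂ] E)).restrictScalars ℝ with hJ
  set L : (V.restrictScalars ℝ) →ₗ[ℝ] (E ⧸ 𝓔) × (E ⧸ 𝓔) :=
    (π.prod (π.comp J)).comp (V.restrictScalars ℝ).subtype with hL
  have hinj : Function.Injective L := by
    rw [← LinearMap.ker_eq_bot, LinearMap.ker_eq_bot']
    intro w hw
    have h1 := Prod.ext_iff.mp hw
    ext
    refine h w w.2 ((Submodule.Quotient.mk_eq_zero 𝓔).mp h1.1)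
      ((Submodule.Quotient.mk_eq_zero 𝓔).mp h1.2)
  have h1 := LinearMap.finrank_le_finrank_of_injective hinj
  have h2 : Module.finrank ℝ (V.restrictScalars ℝ) = 2 * Module.finrank ℂ V :=
    finrank_real_of_complex V
  rw [Module.finrank_prod, h2, hV] at h1
  have := 𝓔.finrank_quotient_add_finrank
  omega

end

section

section Derivatives

variable {E : Type*} [NormedAddCommGroup E] [NormedSpace ℝ E]

lemma hasFDerivAt_half_quadratic {Q : E →L[ℝ] E →L[ℝ] ℝ} (hQ : ∀ v w, Q v w = Q w v) (z₀ z : E) :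
    HasFDerivAt (fun z => Q (z - z₀) (z - z₀) / 2) (Q (z - z₀)) z := by
  have h1 : HasFDerivAt (fun z : E => z - z₀) (ContinuousLinearMap.id ℝ E) z :=
    (hasFDerivAt_id z).sub_const z₀
  have h2 := ((Q.hasFDerivAt.comp z h1).clm_apply h1).const_mul (1 / 2)
  refine (h2.congr_of_eventuallyEq (Eventually.of_forall fun y => ?_)).congr_fderiv ?_
  · simp; ring
  · ext w
    have := hQ w (z - z₀)
    simp only [map_sub, sub_apply] at this
    simp
    linarith

/-- The correction added to `φ` near a critical point `z₀`: a convex combination, with weight `g`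
of the quadratic form `Q`, replaces `φ` by `c` plus a positive semidefinite quadratic form. -/
noncomputable def crossing (φ : E → ℝ) (Q H : E →L[ℝ] E →L[ℝ] ℝ) (z₀ : E) (c : ℝ) (g : ℝ → ℝ)
    (z : E) : ℝ :=
  g (Q (z - z₀) (z - z₀) / 2) * (c + (Q + H) (z - z₀) (z - z₀) / 2 / 2 - φ z)

variable {φ : E → ℝ} {Q H : E →L[ℝ] E →L[ℝ] ℝ} {z₀ : E} {c : ℝ} {g g' g'' : ℝ → ℝ}

lemma contDiffAt_crossing (hg : ContDiff ℝ 2 g) {z : E} (hφ : ContDiffAt ℝ 2 φ z) :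
    ContDiffAt ℝ 2 (crossing φ Q H z₀ c g) z := by
  have h1 : ∀ B : E →L[ℝ] E →L[ℝ] ℝ,
      ContDiffAt ℝ 2 (fun z => B (z - z₀) (z - z₀) / 2) z := fun B => by
    have h := (contDiffAt_id (𝕜 := ℝ) (n := 2) (x := z)).sub contDiffAt_const (f := id)
      (g := fun _ => z₀)
    exact (((B.contDiff.contDiffAt).comp z h).clm_apply h).div_const 2
  exact ((hg.contDiffAt).comp z (h1 Q)).mul
    ((contDiffAt_const.add ((h1 (Q + H)).div_const 2)).sub hφ)

lemma fderiv_add_crossing (hQ : ∀ v w, Q v w = Q w v) (hH : ∀ v w, H v w = H w v)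
    (hg : ∀ t, HasDerivAt g (g' t) t) {z : E} (hφ : DifferentiableAt ℝ φ z) (h : E) :
    fderiv ℝ (fun z => φ z + crossing φ Q H z₀ c g z) z h = fderiv ℝ φ z h
      + (g' (Q (z - z₀) (z - z₀) / 2) * Q (z - z₀) h *
          (c + (Q + H) (z - z₀) (z - z₀) / 2 / 2 - φ z)
        + g (Q (z - z₀) (z - z₀) / 2) * ((Q + H) (z - z₀) h / 2 - fderiv ℝ φ z h)) := by
  have hQH : ∀ v w, (Q + H) v w = (Q + H) w v := fun v w => by
    simp only [add_apply, hQ v w, hH v w]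
  have h1 := (hg (Q (z - z₀) (z - z₀) / 2)).comp_hasFDerivAt z (hasFDerivAt_half_quadratic hQ z₀ z)
  have h2 := ((((hasFDerivAt_half_quadratic hQH z₀ z).const_mul (1 / 2)).const_add c).sub
    hφ.hasFDerivAt)
  have h3 := hφ.hasFDerivAt.add (h1.mul h2)
  have h4 := h3.congr_of_eventuallyEq (f₁ := fun z => φ z + crossing φ Q H z₀ c g z)
    (Eventually.of_forall fun y => by simp [crossing]; left; ring)
  rw [h4.fderiv]
  simp
  ring

lemma hasDerivAt_line (z h : E) : HasDerivAt (fun x : ℝ => z + x • h) h 0 := by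
  have := ((hasDerivAt_id (0 : ℝ)).smul_const h).const_add z
  rwa [one_smul] at this

lemma hasDerivAt_comp_line {F : Type*} [NormedAddCommGroup F] [NormedSpace ℝ F] {ψ : E → F}
    {ψ' : E →L[ℝ] F} {z : E} (hψ : HasFDerivAt ψ ψ' z) (h : E) :
    HasDerivAt (fun x : ℝ => ψ (z + x • h)) (ψ' h) 0 := by
  have h1 : HasFDerivAt ψ ψ' (z + (0 : ℝ) • h) := by rwa [zero_smul, add_zero]
  exact h1.comp_hasDerivAt (0 : ℝ) (hasDerivAt_line z h)

lemma hasFDerivAt_apply_const {ψ : E → E →L[ℝ] ℝ} {ψ' : E →L[ℝ] E →L[ℝ] ℝ} {z : E}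
    (hψ : HasFDerivAt ψ ψ' z) (h : E) : HasFDerivAt (fun y => ψ y h) (ψ'.flip h) z := by
  refine (hψ.clm_apply (hasFDerivAt_const h z)).congr_fderiv ?_
  ext w
  simp

lemma hasDerivAt_fderiv_line (hφ : ContDiffAt ℝ 2 φ z₀) (h : E) :
    HasDerivAt (fun x : ℝ => fderiv ℝ φ (z₀ + x • h) h) (fderiv ℝ (fderiv ℝ φ) z₀ h h) 0 := by
  have h1 : HasFDerivAt (fderiv ℝ φ) (fderiv ℝ (fderiv ℝ φ) z₀) z₀ :=
    ((hφ.fderiv_right (m := 1) (by norm_num)).differentiableAt (by norm_num)).hasFDerivAt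
  exact hasDerivAt_comp_line (hasFDerivAt_apply_const h1 h) h

lemma hessian_add_crossing (hQ : ∀ v w, Q v w = Q w v) (hH : ∀ v w, H v w = H w v)
    (hg : ∀ t, HasDerivAt g (g' t) t) (hg' : ∀ t, HasDerivAt g' (g'' t) t) (hgc : ContDiff ℝ 2 g)
    {z : E} (hφ : ContDiffAt ℝ 2 φ z) (h : E) {t b ψ a A : ℝ}
    (ht : Q (z - z₀) (z - z₀) / 2 = t) (hb : Q (z - z₀) h = b)
    (hψ : c + (Q + H) (z - z₀) (z - z₀) / 2 / 2 - φ z = ψ)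
    (ha : (Q + H) (z - z₀) h / 2 - fderiv ℝ φ z h = a) (hA : fderiv ℝ (fderiv ℝ φ) z h h = A) :
    fderiv ℝ (fderiv ℝ (fun z => φ z + crossing φ Q H z₀ c g z)) z h h
      = A + g'' t * b ^ 2 * ψ + g' t * Q h h * ψ + 2 * g' t * b * a
        + g t * ((Q + H) h h / 2 - A) := by
  have hz0 : z + (0 : ℝ) • h = z := by simp
  have hQH : ∀ v w, (Q + H) v w = (Q + H) w v := fun v w => by
    simp only [add_apply, hQ v w, hH v w]
  have dt : ∀ B : E →L[ℝ] E →L[ℝ] ℝ, (∀ v w, B v w = B w v) →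
      HasDerivAt (fun x : ℝ => B (z + x • h - z₀) (z + x • h - z₀) / 2) (B (z - z₀) h) 0 := by
    intro B hB
    exact hasDerivAt_comp_line (hasFDerivAt_half_quadratic hB z₀ z) h
  have db : ∀ B : E →L[ℝ] E →L[ℝ] ℝ,
      HasDerivAt (fun x : ℝ => B (z + x • h - z₀) h) (B h h) 0 := by
    intro B
    have h1 : HasFDerivAt (fun y : E => B (y - z₀)) B z :=
      B.hasFDerivAt.comp z ((hasFDerivAt_id z).sub_const z₀)
    exact hasDerivAt_comp_line (hasFDerivAt_apply_const h1 h) h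
  have dφ : HasDerivAt (fun x : ℝ => φ (z + x • h)) (fderiv ℝ φ z h) 0 :=
    hasDerivAt_comp_line (hφ.differentiableAt (by norm_num)).hasFDerivAt h
  have dA := hasDerivAt_fderiv_line hφ h
  have e0 : Q (z + (0 : ℝ) • h - z₀) (z + (0 : ℝ) • h - z₀) / 2 = t := by rw [hz0, ht]
  have dg : HasDerivAt (fun x : ℝ => g (Q (z + x • h - z₀) (z + x • h - z₀) / 2))
      (g' t * b) 0 := by
    rw [← hb]
    exact HasDerivAt.comp (0 : ℝ) (by rw [e0]; exact hg t) (dt Q hQ)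
  have dg' : HasDerivAt (fun x : ℝ => g' (Q (z + x • h - z₀) (z + x • h - z₀) / 2))
      (g'' t * b) 0 := by
    rw [← hb]
    exact HasDerivAt.comp (0 : ℝ) (by rw [e0]; exact hg' t) (dt Q hQ)
  have dψ : HasDerivAt (fun x : ℝ => c + (Q + H) (z + x • h - z₀) (z + x • h - z₀) / 2 / 2
      - φ (z + x • h)) a 0 := by
    rw [← ha]
    exact (((dt (Q + H) hQH).div_const 2).const_add c).sub dφ
  have da : HasDerivAt (fun x : ℝ => (Q + H) (z + x • h - z₀) h / 2 - fderiv ℝ φ (z + x • h) h)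
      ((Q + H) h h / 2 - A) 0 := by
    rw [← hA]
    exact ((db (Q + H)).div_const 2).sub dA
  have hF := dA.add (((dg'.mul (db Q)).mul dψ).add (dg.mul da))
  have hE := hasDerivAt_fderiv_line
    (hφ.add (contDiffAt_crossing (Q := Q) (H := H) (z₀ := z₀) (c := c) hgc hφ)) h
  have hd : ∀ᶠ y in 𝓝 z, DifferentiableAt ℝ φ y :=
    (hφ.eventually (by norm_num)).mono fun y hy => hy.differentiableAt (by norm_num)
  have hd' : ∀ᶠ x : ℝ in 𝓝 0, DifferentiableAt ℝ φ (z + x • h) := by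
    refine (hasDerivAt_line z h).continuousAt.eventually ?_
    simpa using hd
  have heq : (fun x : ℝ => fderiv ℝ (fun z => φ z + crossing φ Q H z₀ c g z) (z + x • h) h)
      =ᶠ[𝓝 0] _ := hd'.mono fun x hx => fderiv_add_crossing hQ hH hg hx h
  have := (hE.congr_of_eventuallyEq heq.symm).unique hF
  refine this.trans ?_
  simp only [Pi.mul_apply, hz0, ht, hb, hψ, ha, hA]
  ring

end Derivatives

end

section

lemma exists_bilin_bound {E : Type*} [NormedAddCommGroup E] [NormedSpace ℝ E]
    (B : E →L[ℝ] E →L[ℝ] ℝ) : ∃ M > 0, ∀ x y, |B x y| ≤ M * ‖x‖ * ‖y‖ := by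
  refine ⟨‖B‖ + 1, by positivity, fun x y => ?_⟩
  have h := B.le_opNorm₂ x y
  rw [Real.norm_eq_abs] at h
  refine h.trans ?_
  gcongr
  linarith

lemma crossing_gradient_pos {s q h a γ ψ : ℝ} (hs0 : 0 ≤ s) (hs1 : s ≤ 1) (hq : 0 < q)
    (hh : |h| ≤ q) (ha : q / 2 ≤ a) (hγ : γ ≤ 0)
    (hψ : γ ≠ 0 → |ψ| ≤ q ∧ |q / 2 * γ| ≤ 1 / 8 ∧ (h ≤ 0 → 0 ≤ ψ)) (hne : s = 1 → q + h ≠ 0) :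
    0 < a + (γ * h * ψ + s * ((q + h) / 2 - a)) := by
  have hh' := abs_le.1 hh
  rcases le_or_gt h 0 with h0 | h0
  · have h1 : 0 ≤ γ * h * ψ := by
      rcases eq_or_ne γ 0 with hg | hg
      · simp [hg]
      · exact mul_nonneg (mul_nonneg_of_nonpos_of_nonpos hγ h0) ((hψ hg).2.2 h0)
    rcases hs1.lt_or_eq with h2 | h2
    · have h3 : 0 < (1 - s) * a := mul_pos (by linarith) (by linarith)
      have h4 : 0 ≤ s * ((q + h) / 2) := mul_nonneg hs0 (by linarith)
      nlinarith
    · have h3 := hne h2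
      have h4 : 0 < q + h := lt_of_le_of_ne (by linarith) (Ne.symm h3)
      subst h2
      linarith
  · have h1 : -(q / 4) ≤ γ * h * ψ := by
      rcases eq_or_ne γ 0 with hg | hg
      · simp [hg]; linarith
      · obtain ⟨h2, h3, -⟩ := hψ hg
        have h4 : |γ * h * ψ| ≤ q / 4 := by
          rw [abs_mul, abs_mul]
          rw [abs_mul, abs_of_pos (by linarith : 0 < q / 2)] at h3
          calc |γ| * |h| * |ψ| ≤ |γ| * q * q := by gcongr
            _ = 2 * q * (q / 2 * |γ|) := by ring
            _ ≤ 2 * q * (1 / 8) := by gcongr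
            _ = q / 4 := by ring
        exact (abs_le.1 h4).1
    have h3 : 0 ≤ (1 - s) * (a - q / 2) := mul_nonneg (by linarith) (by linarith)
    have h4 : 0 ≤ s * h := mul_nonneg hs0 h0.le
    nlinarith

lemma crossing_hessian_ge {s A Hh Qh η n M b a r m t γ γ₂ ψ δ : ℝ} (hs0 : 0 ≤ s) (hs1 : s ≤ 1)
    (hM : 0 < M) (hm : 0 < m) (hn : 0 ≤ n) (hr : 0 ≤ r) (hη : 0 ≤ η) (hδ : 0 ≤ δ) (ht : 0 ≤ t)
    (hA : Hh - η * n ^ 2 ≤ A) (hHQ : |Hh| ≤ Qh) (hQM : Qh ≤ M * n ^ 2) (hb : |b| ≤ M * r * n)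
    (ha : |a| ≤ 2 * M * r * n) (hrt : m * r ^ 2 ≤ 2 * t)
    (hγ : (γ = 0 ∧ γ₂ = 0) ∨ (|ψ| ≤ 2 * t ∧ |t * γ| ≤ δ ∧ |t ^ 2 * γ₂| ≤ δ)) :
    Hh - (η + δ * (12 * M ^ 2 / m + 2 * M)) * n ^ 2
      ≤ A + γ₂ * b ^ 2 * ψ + γ * Qh * ψ + 2 * γ * b * a + s * ((Qh + Hh) / 2 - A) := by
  have hHQ' := abs_le.1 hHQ
  have hmain : Hh - η * n ^ 2 ≤ A + s * ((Qh + Hh) / 2 - A) := by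
    have h1 : 0 ≤ (1 - s) * (A - (Hh - η * n ^ 2)) := mul_nonneg (by linarith) (by linarith)
    have h2 : 0 ≤ s * ((Qh - Hh) / 2 + η * n ^ 2) :=
      mul_nonneg hs0 (add_nonneg (by linarith) (by positivity))
    nlinarith
  have hr2 : r ^ 2 ≤ 2 * t / m := by rw [le_div_iff₀ hm]; linarith
  have hQ0 : 0 ≤ Qh := (abs_nonneg _).trans hHQ
  have herr : |γ₂ * b ^ 2 * ψ + γ * Qh * ψ + 2 * γ * b * a|
      ≤ δ * (12 * M ^ 2 / m + 2 * M) * n ^ 2 := by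
    rcases hγ with ⟨h1, h2⟩ | ⟨h1, h2, h3⟩
    · rw [h1, h2]; simp; positivity
    · rw [abs_mul, abs_of_nonneg ht] at h2
      rw [abs_mul, abs_of_nonneg (by positivity : 0 ≤ t ^ 2)] at h3
      have e1 : |γ₂ * b ^ 2 * ψ| ≤ δ * (4 * M ^ 2 / m) * n ^ 2 := by
        rw [abs_mul, abs_mul, abs_pow]
        calc |γ₂| * |b| ^ 2 * |ψ| ≤ |γ₂| * (M * r * n) ^ 2 * (2 * t) := by gcongr
          _ = |γ₂| * M ^ 2 * n ^ 2 * (2 * t) * r ^ 2 := by ring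
          _ ≤ |γ₂| * M ^ 2 * n ^ 2 * (2 * t) * (2 * t / m) := by gcongr
          _ = (t ^ 2 * |γ₂|) * (4 * M ^ 2 / m) * n ^ 2 := by ring
          _ ≤ δ * (4 * M ^ 2 / m) * n ^ 2 := by gcongr
      have e2 : |γ * Qh * ψ| ≤ δ * (2 * M) * n ^ 2 := by
        rw [abs_mul, abs_mul, abs_of_nonneg hQ0]
        calc |γ| * Qh * |ψ| ≤ |γ| * (M * n ^ 2) * (2 * t) := by gcongr
          _ = (t * |γ|) * (2 * M) * n ^ 2 := by ring
          _ ≤ δ * (2 * M) * n ^ 2 := by gcongr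
      have e3 : |2 * γ * b * a| ≤ δ * (8 * M ^ 2 / m) * n ^ 2 := by
        rw [abs_mul, abs_mul, abs_mul, abs_of_pos (by norm_num : (0 : ℝ) < 2)]
        calc 2 * |γ| * |b| * |a| ≤ 2 * |γ| * (M * r * n) * (2 * M * r * n) := by gcongr
          _ = 4 * |γ| * M ^ 2 * n ^ 2 * r ^ 2 := by ring
          _ ≤ 4 * |γ| * M ^ 2 * n ^ 2 * (2 * t / m) := by gcongr
          _ = (t * |γ|) * (8 * M ^ 2 / m) * n ^ 2 := by ring
          _ ≤ δ * (8 * M ^ 2 / m) * n ^ 2 := by gcongr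
      refine (abs_add_le _ _).trans ((add_le_add ((abs_add_le _ _).trans (add_le_add e1 e2)) e3).trans
        (le_of_eq ?_))
      ring
  have := (abs_le.1 herr).1
  nlinarith


set_option maxHeartbeats 1000000 in
lemma exists_crossing {E : Type*} [NormedAddCommGroup E] [NormedSpace ℂ E]
    [FiniteDimensional ℂ E] {φ : E → ℝ} {X : Set E} (hX : IsOpen X)
    (hφ : ∀ z ∈ X, ContDiffAt ℝ 2 φ z) {z₀ : E} (hz₀ : z₀ ∈ X) (hcrit : fderiv ℝ φ z₀ = 0)
    (hnd : ∀ v, fderiv ℝ (fderiv ℝ φ) z₀ v = 0 → v = 0) (hL : LeviTwoPos φ z₀) :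
    ∃ 𝓔 : Submodule ℝ E, Module.finrank ℝ 𝓔 + 2 ≤ Module.finrank ℝ E ∧
      ∀ R₀ > 0, ∀ ϖ > 0, ∃ R₁ > 0, R₁ ≤ R₀ ∧ closedBall z₀ R₁ ⊆ X ∧ ∃ D₀ > 0, ∀ D, 0 < D → D ≤ D₀ →
        ∃ χ : E → ℝ, (∀ z, z ∉ closedBall z₀ R₁ → χ z = 0) ∧ (∀ z ∈ X, ContDiffAt ℝ 2 χ z) ∧
          (∀ z, |χ z| ≤ ϖ) ∧
          (∀ z ∈ closedBall z₀ R₁, φ z₀ - D < φ z + χ z → Regular (fun y => φ y + χ y) z) ∧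
          ∀ z ∈ X, φ z₀ - D < φ z → z - z₀ ∉ 𝓔 → φ z₀ - D < φ z + χ z := by
  have : FiniteDimensional ℝ E := inferInstance
  obtain ⟨H, hH⟩ : ∃ H, fderiv ℝ (fderiv ℝ φ) z₀ = H := ⟨_, rfl⟩
  have hHs : ∀ v w, H v w = H w v := fun v w => by
    rw [← hH]; exact ((hφ z₀ hz₀).isSymmSndFDerivAt (by simp)).eq v w
  rw [hH] at hnd
  obtain ⟨Q, σ, m, hm, hQs, hmQ, hHQ, hHσ, hQσ, hQH⟩ := exists_abs_form hHs hnd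
  obtain ⟨V, hV, hVpos⟩ := hL
  obtain ⟨M₁, hM₁, hQM₁⟩ := exists_bilin_bound Q
  obtain ⟨M₂, hM₂, hHM₂⟩ := exists_bilin_bound H
  set M := max M₁ M₂ with hMdef
  have hM : 0 < M := hM₁.trans_le (le_max_left _ _)
  have hQM : ∀ x y, |Q x y| ≤ M * ‖x‖ * ‖y‖ := fun x y => (hQM₁ x y).trans (by
    gcongr; exact le_max_left _ _)
  have hHM : ∀ x y, |H x y| ≤ M * ‖x‖ * ‖y‖ := fun x y => (hHM₂ x y).trans (by
    gcongr; exact le_max_right _ _)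
  set S := ‖σ‖ + 1 with hS
  have hS0 : 0 < S := by positivity
  have hσS : ∀ v, ‖σ v‖ ≤ S * ‖v‖ := fun v => (σ.le_opNorm v).trans (by gcongr; linarith)
  have hlevi : ∀ w, levi φ z₀ w = H w w + H (Complex.I • w) (Complex.I • w) := fun w => by
    rw [levi, hH]
  obtain ⟨l, hl, hlV⟩ : ∃ l > 0, ∀ v ∈ V,
      l * ‖v‖ ^ 2 ≤ H v v + H (Complex.I • v) (Complex.I • v) := by
    refine exists_pos_mul_norm_sq_le (q := fun v => H v v + H (Complex.I • v) (Complex.I • v))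
      ?_ ?_ (V.restrictScalars ℝ) fun v hv hv0 => ?_
    · have hI : Continuous fun v : E => Complex.I • v := continuous_const_smul _
      have hB : Continuous fun v : E => H v v := H.continuous.clm_apply continuous_id
      exact hB.add (hB.comp hI)
    · intro c v
      simp only [smul_comm Complex.I c v, map_smul, smul_apply, smul_eq_mul]
      ring
    · have := hVpos v hv hv0
      rwa [hlevi] at this
  set 𝓔 : Submodule ℝ E := LinearMap.ker ((Q + H : E →L[ℝ] E →L[ℝ] ℝ) : E →ₗ[ℝ] E →L[ℝ] ℝ) with h𝓔
  have hmem : ∀ v, v ∈ 𝓔 ↔ Q v + H v = 0 := fun v => Iff.rfl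
  refine ⟨𝓔, finrank_ker_add_two_le hV fun w hw h1 h2 => ?_, ?_⟩
  · by_contra hw0
    have h3 := hVpos w hw hw0
    rw [hlevi] at h3
    have h4 : ∀ u, u ∈ 𝓔 → H u u ≤ 0 := fun u hu => by
      have h5 := congrArg (fun L : E →L[ℝ] ℝ => L u) ((hmem u).1 hu)
      have h6 := hmQ u
      have h7 : 0 ≤ m * ‖u‖ ^ 2 := by positivity
      have h8 : Q u u + H u u = 0 := h5
      linarith
    linarith [h4 w h1, h4 _ h2]
  intro R₀ hR₀ ϖ hϖ
  set η := min (min (m / 16) (m / 2 / S)) (min M (l / 8)) with hη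
  have hη0 : 0 < η := by
    simp only [hη, lt_min_iff]; refine ⟨⟨?_, ?_⟩, ?_, ?_⟩ <;> positivity
  have hη1 : η ≤ m / 16 := (min_le_left _ _).trans (min_le_left _ _)
  have hη2 : η * S ≤ m / 2 := by
    rw [← le_div_iff₀ hS0]; exact (min_le_left _ _).trans (min_le_right _ _)
  have hη3 : η ≤ M := (min_le_right _ _).trans (min_le_left _ _)
  have hη4 : η ≤ l / 8 := (min_le_right _ _).trans (min_le_right _ _)
  set C := 12 * M ^ 2 / m + 2 * M with hC
  have hC0 : 0 < C := by positivity
  set δ := min (1 / 8) (l / 8 / C) with hδ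
  have hδ0 : 0 < δ := by simp only [hδ, lt_min_iff]; constructor <;> positivity
  have hδ1 : δ ≤ 1 / 8 := min_le_left _ _
  have hδ2 : δ * C ≤ l / 8 := by rw [← le_div_iff₀ hC0]; exact min_le_right _ _
  obtain ⟨R₂, hR₂, htay⟩ := exists_taylor_bounds hX hφ hz₀ hcrit hH hη0
  set R₁ := min (min R₀ R₂) (√(ϖ / 2 / m)) with hR₁
  have hR₁0 : 0 < R₁ := by
    simp only [hR₁, lt_min_iff]; exact ⟨⟨hR₀, hR₂⟩, Real.sqrt_pos.2 (by positivity)⟩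
  have hR₁ϖ : m * R₁ ^ 2 ≤ ϖ / 2 := by
    have h1 : R₁ ^ 2 ≤ ϖ / 2 / m := by
      rw [← Real.sq_sqrt (by positivity : 0 ≤ ϖ / 2 / m)]
      exact pow_le_pow_left₀ hR₁0.le (min_le_right _ _) 2
    rw [le_div_iff₀ hm] at h1; linarith
  have hR₁R₂ : R₁ ≤ R₂ := (min_le_left _ _).trans (min_le_right _ _)
  obtain ⟨τ, hτ, g, g', g'', hg, hg', hgc, hg0, hg1, hgz, hgR, hg'n, hgτ, hgδ⟩ :=
    exists_log_cutoff hδ0 (by positivity : 0 < m * R₁ ^ 2 / 2)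
  refine ⟨R₁, hR₁0, (min_le_left _ _).trans (min_le_left _ _), fun z hz => ?_,
    min (τ / 8) (ϖ / 2), by simp only [lt_min_iff]; constructor <;> positivity, fun D hD hD₀ => ?_⟩
  · have := (htay (z - z₀) ((mem_closedBall_iff_norm.1 hz).trans hR₁R₂)).1
    rwa [add_sub_cancel] at this
  have hDτ : D ≤ τ / 8 := hD₀.trans (min_le_left _ _)
  have hDϖ : D ≤ ϖ / 2 := hD₀.trans (min_le_right _ _)
  set κ := φ z₀ with hκ
  set χ := crossing φ Q H z₀ (κ - D) g with hχ
  have hχ_apply : ∀ z, χ z = g (Q (z - z₀) (z - z₀) / 2) *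
    (κ - D + (Q (z - z₀) (z - z₀) + H (z - z₀) (z - z₀)) / 2 / 2 - φ z) := fun z => rfl
  have hgt : ∀ z, z ∉ ball z₀ R₁ → g (Q (z - z₀) (z - z₀) / 2) = 0 := by
    intro z hz
    apply hgR
    rw [mem_ball_iff_norm, not_lt] at hz
    have := hmQ (z - z₀)
    have h2 : m * R₁ ^ 2 ≤ m * ‖z - z₀‖ ^ 2 := by gcongr
    linarith
  have hball : ∀ z ∈ closedBall z₀ R₁, ‖z - z₀‖ ≤ R₁ := fun z hz => mem_closedBall_iff_norm.1 hz
  have hfin : ∀ z, ‖z - z₀‖ ≤ R₁ → ∀ t ψ q h, Q (z - z₀) (z - z₀) = q → H (z - z₀) (z - z₀) = h →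
      q / 2 = t → κ - D + (q + h) / 2 / 2 - φ z = ψ →
      |ψ| ≤ D + t + t / 8 ∧ (τ ≤ t → |ψ| ≤ 2 * t) ∧ (τ ≤ t → h ≤ 0 → 0 ≤ ψ) := by
    intro z hz t ψ q h hq hh ht hψ
    obtain ⟨-, -, -, h1⟩ := htay (z - z₀) (hz.trans hR₁R₂)
    rw [add_sub_cancel, hh] at h1
    have h2 := hmQ (z - z₀)
    have h3 := abs_le.1 (hHQ (z - z₀))
    rw [hq] at h2 h3
    rw [hh] at h3
    have h4 : η * ‖z - z₀‖ ^ 2 ≤ t / 8 := by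
      have : η * ‖z - z₀‖ ^ 2 ≤ m / 16 * ‖z - z₀‖ ^ 2 := by gcongr
      linarith
    have h5 := abs_le.1 (h1.trans h4)
    refine ⟨abs_le.2 ⟨by linarith, by linarith⟩, fun h6 => abs_le.2 ⟨by linarith, by linarith⟩,
      fun h6 h7 => by linarith⟩
  refine ⟨χ, fun z hz => ?_, fun z hz => contDiffAt_crossing hgc (hφ z hz), fun z => ?_,
    fun z hz hzD => ?_, fun z hzX hzD hz𝓔 => ?_⟩
  · rw [hχ_apply, hgt z fun h => hz (ball_subset_closedBall h), zero_mul]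
  · rcases em (z ∈ ball z₀ R₁) with hz | hz
    · rw [hχ_apply, abs_mul, abs_of_nonneg (hg0 _)]
      rcases lt_or_ge (Q (z - z₀) (z - z₀) / 2) (m * R₁ ^ 2 / 2) with ht | ht
      · have h1 := (hfin z (hball z (ball_subset_closedBall hz)) _ _ _ _ rfl rfl rfl rfl).1
        refine (mul_le_of_le_one_left (abs_nonneg _) (hg1 _)).trans (h1.trans ?_)
        linarith
      · rw [hgR _ ht, zero_mul]; exact hϖ.le
    · rw [hχ_apply, hgt z hz, zero_mul, abs_zero]; exact hϖ.le
  · have hzX : z ∈ X := by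
      have := (htay (z - z₀) ((hball z hz).trans hR₁R₂)).1
      rwa [add_sub_cancel] at this
    obtain ⟨-, hD2, hD1, -⟩ := htay (z - z₀) ((hball z hz).trans hR₁R₂)
    rw [add_sub_cancel] at hD2 hD1
    obtain ⟨v, hv⟩ : ∃ v, z - z₀ = v := ⟨_, rfl⟩
    have hvn := hball z hz
    have hf := hfin z hvn _ _ _ _ rfl rfl rfl rfl
    have hχz := hχ_apply z
    have hgrad := fun x => fderiv_add_crossing (c := κ - D) (z₀ := z₀) hQs hHs hg
      ((hφ z hzX).differentiableAt (by norm_num)) x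
    have hhess := fun x => hessian_add_crossing (c := κ - D) (z₀ := z₀) hQs hHs hg hg' hgc
      (hφ z hzX) x rfl rfl rfl rfl rfl
    rw [hv] at hD1 hf hχz hgrad hhess hvn
    have hq := hmQ v
    obtain ⟨t, ht⟩ : ∃ t, Q v v / 2 = t := ⟨_, rfl⟩
    obtain ⟨ψ, hψ⟩ : ∃ ψ, κ - D + (Q v v + H v v) / 2 / 2 - φ z = ψ := ⟨_, rfl⟩
    have hψ' : κ - D + (Q + H) v v / 2 / 2 - φ z = ψ := hψ
    simp only [ht, hψ, hψ'] at hf hχz hgrad hhess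
    have hv0 : v ≠ 0 := by
      rintro rfl
      have ht0 : t = 0 := by rw [← ht]; simp
      simp only [map_zero] at hψ
      rw [hχz, ht0, hgz] at hzD
      linarith
    have ht0 : 0 ≤ t := by
      have : 0 ≤ m * ‖v‖ ^ 2 := by positivity
      linarith
    apply regular_of_leviTwoPos
    · refine ⟨V, hV, fun w hw hw0 => ?_⟩
      have key : ∀ x, H x x - (η + δ * C) * ‖x‖ ^ 2
          ≤ fderiv ℝ (fderiv ℝ fun y => φ y + χ y) z x x := by
        intro x
        rw [hhess x]
        have hax := hD1 x
        refine crossing_hessian_ge (hg0 t) (hg1 t) hM hm (norm_nonneg x) (norm_nonneg v) hη0.le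
          hδ0.le ht0 ?_ (hHQ x) ?_ (hQM v x) ?_ (by linarith) ?_
        · have := (abs_le.1 (hD2 x x)).1; rw [mul_assoc, ← sq] at this; linarith
        · have := (le_abs_self _).trans (hQM x x); rwa [mul_assoc, ← sq] at this
        · have h1 := hQM v x
          have h2 := hHM v x
          have h3 : η * ‖v‖ * ‖x‖ ≤ M * ‖v‖ * ‖x‖ := by gcongr
          have e : (Q + H) v x / 2 - fderiv ℝ φ z x
              = Q v x / 2 - H v x / 2 - (fderiv ℝ φ z x - H v x) := by
            simp only [add_apply]; ring
          rw [abs_le] at h1 h2 hax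
          rw [e, abs_le]
          constructor <;> linarith
        · rcases lt_or_ge t τ with h | h
          · exact Or.inl (hgτ t h)
          · exact Or.inr ⟨hf.2.1 h, hgδ t (hτ.trans_le h)⟩
      have k1 := key w
      have k2 := key (Complex.I • w)
      rw [norm_smul, Complex.norm_I, one_mul] at k2
      have k3 := hlV w hw
      have k4 : 0 < l * ‖w‖ ^ 2 := by have := norm_pos_iff.2 hw0; positivity
      have k5 : (η + δ * C) * ‖w‖ ^ 2 ≤ (l / 4) * ‖w‖ ^ 2 := by gcongr; linarith
      rw [levi]
      linarith
    · intro hzero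
      have h0 := hgrad (σ v)
      change fderiv ℝ (fun y => φ y + χ y) z (σ v) = _ at h0
      rw [hzero] at h0
      have hb : Q v (σ v) = H v v := hQσ v
      have hs : (Q + H) v (σ v) = Q v v + H v v := by
        simp only [add_apply, hQσ, hHσ]; ring
      rw [hs, hb] at h0
      have hqpos : 0 < Q v v := by
        have := norm_pos_iff.2 hv0
        have : 0 < m * ‖v‖ ^ 2 := by positivity
        linarith
      refine absurd h0 (ne_of_lt ?_)
      refine crossing_gradient_pos (hg0 t) (hg1 t) hqpos (hHQ v) ?_ (hg'n t) (fun hγ => ?_) ?_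
      · have h1 := (abs_le.1 (hD1 (σ v))).1
        rw [hHσ] at h1
        have h2 : η * ‖v‖ * ‖σ v‖ ≤ η * ‖v‖ * (S * ‖v‖) := by gcongr; exact hσS v
        have h3 : η * ‖v‖ * (S * ‖v‖) ≤ m / 2 * ‖v‖ ^ 2 := by
          have : η * S * ‖v‖ ^ 2 ≤ m / 2 * ‖v‖ ^ 2 := by gcongr
          linarith
        linarith
      · have h : τ ≤ t := by
          by_contra! h
          exact hγ (hgτ t h).1
        refine ⟨by rw [show Q v v = 2 * t by linarith]; exact hf.2.1 h, ?_, hf.2.2 h⟩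
        rw [ht]
        exact (hgδ t (hτ.trans_le h)).1.trans hδ1
      · intro hs1 hqh
        rw [hχz, hs1] at hzD
        rw [hqh] at hψ
        linarith
  · rw [hχ_apply]
    have hP : 0 < Q (z - z₀) (z - z₀) + H (z - z₀) (z - z₀) := by
      refine lt_of_le_of_ne ?_ fun h => hz𝓔 ((hmem _).2 (hQH _ h.symm))
      linarith [(abs_le.1 (hHQ (z - z₀))).1]
    obtain ⟨s, hs⟩ : ∃ s, g (Q (z - z₀) (z - z₀) / 2) = s := ⟨_, rfl⟩
    have hs0 := hg0 (Q (z - z₀) (z - z₀) / 2)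
    have hs1 := hg1 (Q (z - z₀) (z - z₀) / 2)
    rw [hs] at hs0 hs1 ⊢
    rcases hs1.lt_or_eq with h | h
    · have h1 : 0 < (1 - s) * (φ z - (κ - D)) := mul_pos (by linarith) (by linarith)
      have h2 := mul_nonneg hs0 hP.le
      nlinarith
    · rw [h]; linarith

end

section

variable {E : Type*} [NormedAddCommGroup E] [NormedSpace ℂ E]

lemma Regular.congr {φ ψ : E → ℝ} {z : E} (h : Regular φ z) (he : φ =ᶠ[𝓝 z] ψ) : Regular ψ z := by
  have h1 : fderiv ℝ φ z = fderiv ℝ ψ z := he.fderiv_eq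
  have h2 : fderiv ℝ (fderiv ℝ φ) z = fderiv ℝ (fderiv ℝ ψ) z := he.fderiv.fderiv_eq
  simpa only [Regular, levi, h1, h2] using h

lemma exists_crossing_finset [FiniteDimensional ℂ E] {φ : E → ℝ} {X : Set E} (hX : IsOpen X)
    (hφ : ∀ z ∈ X, ContDiffAt ℝ 2 φ z) (hL : ∀ z ∈ X, LeviTwoPos φ z) {κ w : ℝ} (hw : 0 < w)
    (crit : Finset E) (hcX : ∀ c ∈ crit, c ∈ X) (hcκ : ∀ c ∈ crit, φ c = κ)
    (hcd : ∀ c ∈ crit, fderiv ℝ φ c = 0)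
    (hcn : ∀ c ∈ crit, ∀ v, fderiv ℝ (fderiv ℝ φ) c v = 0 → v = 0) :
    ∃ (𝓔 : E → Submodule ℝ E) (D : ℝ) (χ : E → ℝ), 0 < D ∧ D ≤ w ∧
      (∀ c ∈ crit, Module.finrank ℝ (𝓔 c) + 2 ≤ Module.finrank ℝ E) ∧
      (∀ z ∈ X, ContDiffAt ℝ 2 χ z) ∧ (∀ z, |χ z| ≤ w) ∧ (∀ z ∈ X, χ z ≠ 0 → κ - w ≤ φ z) ∧
      (∀ z ∈ X, κ - D < φ z + χ z → (z ∉ crit → fderiv ℝ φ z ≠ 0) →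
        Regular (fun y => φ y + χ y) z) ∧
      ∀ z ∈ X, κ - D < φ z → (∀ c ∈ crit, z - c ∉ 𝓔 c) → κ - D < φ z + χ z := by
  choose! 𝓔 h𝓔 hcross using fun c (hc : c ∈ crit) =>
    exists_crossing hX hφ (hcX c hc) (hcd c hc) (hcn c hc) (hL c (hcX c hc))
  have hpos : ∀ᶠ R : ℝ in 𝓝[>] 0, 0 < R := self_mem_nhdsWithin
  have hR : ∃ R₀ > 0, (∀ c ∈ crit, ∀ z ∈ closedBall c R₀, κ - w ≤ φ z) ∧
      ∀ c ∈ crit, ∀ c' ∈ crit, c ≠ c' → R₀ + R₀ < dist c c' := by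
    have h1 : ∀ c ∈ crit, ∀ᶠ R : ℝ in 𝓝[>] 0, ∀ z ∈ closedBall c R, κ - w ≤ φ z := fun c hc => by
      have h2 : ∀ᶠ z in 𝓝 c, κ - w < φ z :=
        (hφ c (hcX c hc)).continuousAt.eventually_const_lt (by rw [hcκ c hc]; linarith)
      obtain ⟨s, hs, h3⟩ := Metric.eventually_nhds_iff.1 h2
      filter_upwards [nhdsWithin_le_nhds (Iio_mem_nhds hs)] with R hR z hz
      exact (h3 ((mem_closedBall.1 hz).trans_lt hR)).le
    have h2 : ∀ c ∈ crit, ∀ c' ∈ crit, ∀ᶠ R : ℝ in 𝓝[>] 0, c ≠ c' → R + R < dist c c' := by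
      intro c _ c' _
      rcases eq_or_ne c c' with h | h
      · exact Eventually.of_forall fun _ h' => absurd h h'
      · filter_upwards [nhdsWithin_le_nhds (Iio_mem_nhds (half_pos (dist_pos.2 h)))] with R hR _
        have : R < dist c c' / 2 := hR
        linarith
    have h3 := hpos.and (((eventually_all_finset crit).2 h1).and
      ((eventually_all_finset crit).2 fun c hc => (eventually_all_finset crit).2 (h2 c hc)))
    obtain ⟨R, hR⟩ := h3.exists
    exact ⟨R, hR⟩
  obtain ⟨R₀, hR₀, hRφ, hRd⟩ := hR
  choose! R₁ hR₁ hR₁₀ hR₁X D₀ hD₀ hcr using fun c hc => hcross c hc R₀ hR₀ w hw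
  obtain ⟨D, hD, hDw, hDD₀⟩ : ∃ D > 0, D ≤ w ∧ ∀ c ∈ crit, D ≤ D₀ c := by
    have h1 : ∀ c ∈ crit, ∀ᶠ D : ℝ in 𝓝[>] 0, D ≤ D₀ c := fun c hc =>
      nhdsWithin_le_nhds (Iic_mem_nhds (hD₀ c hc))
    have h2 : ∀ᶠ D : ℝ in 𝓝[>] 0, D ≤ w := nhdsWithin_le_nhds (Iic_mem_nhds hw)
    obtain ⟨D, h⟩ := (hpos.and (h2.and ((eventually_all_finset crit).2 h1))).exists
    exact ⟨D, h⟩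
  choose! χ hχ0 hχc hχw hχr hχE using fun c hc => hcr c hc D hD (hDD₀ c hc)
  have hdisj : ∀ c ∈ crit, ∀ c' ∈ crit, ∀ z ∈ closedBall c (R₁ c), z ∈ closedBall c' (R₁ c') →
      c = c' := by
    intro c hc c' hc' z hz hz'
    by_contra h
    have h1 := hRd c hc c' hc' h
    have h2 := dist_triangle_left c c' z
    have := mem_closedBall.1 hz
    have := mem_closedBall.1 hz'
    linarith [hR₁₀ c hc, hR₁₀ c' hc']
  have hnear : ∀ c ∈ crit, ∀ z ∈ closedBall c (R₁ c), ∀ᶠ y in 𝓝 z, ∑ b ∈ crit, χ b y = χ c y := by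
    intro c hc z hz
    have h1 : ∀ b ∈ crit, ∀ᶠ y in 𝓝 z, b ≠ c → χ b y = 0 := by
      intro b hb
      rcases eq_or_ne b c with h | h
      · exact Eventually.of_forall fun _ h' => absurd h h'
      · have h2 : z ∉ closedBall b (R₁ b) := fun h' => h (hdisj b hb c hc z h' hz)
        filter_upwards [isClosed_closedBall.isOpen_compl.mem_nhds h2] with y hy _
        exact hχ0 b hb y hy
    filter_upwards [(eventually_all_finset crit).2 h1] with y hy
    exact Finset.sum_eq_single_of_mem c hc hy
  have hfar : ∀ z, (∀ c ∈ crit, z ∉ closedBall c (R₁ c)) → ∀ᶠ y in 𝓝 z, ∑ b ∈ crit, χ b y = 0 := by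
    intro z hz
    have h1 : ∀ b ∈ crit, ∀ᶠ y in 𝓝 z, χ b y = 0 := by
      intro b hb
      filter_upwards [isClosed_closedBall.isOpen_compl.mem_nhds (hz b hb)] with y hy
      exact hχ0 b hb y hy
    filter_upwards [(eventually_all_finset crit).2 h1] with y hy
    exact Finset.sum_eq_zero hy
  refine ⟨𝓔, D, fun z => ∑ c ∈ crit, χ c z, hD, hDw, h𝓔, fun z hz => ?_, fun z => ?_,
    fun z hz h0 => ?_, fun z hz hzD hzc => ?_, fun z hz hzD hz𝓔 => ?_⟩
  · exact ContDiffAt.sum fun c hc => hχc c hc z hz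
  · by_cases h : ∃ c ∈ crit, z ∈ closedBall c (R₁ c)
    · obtain ⟨c, hc, hzc⟩ := h
      beta_reduce
      rw [(hnear c hc z hzc).self_of_nhds]
      exact hχw c hc z
    · push Not at h
      beta_reduce
      rw [(hfar z h).self_of_nhds, abs_zero]
      exact hw.le
  · by_contra! h
    refine h0 (hfar z fun c hc hzc => ?_).self_of_nhds
    exact (hRφ c hc z (closedBall_subset_closedBall (hR₁₀ c hc) hzc)).not_gt h
  · by_cases h : ∃ c ∈ crit, z ∈ closedBall c (R₁ c)
    · obtain ⟨c, hc, hzcb⟩ := h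
      have h1 := hnear c hc z hzcb
      beta_reduce at hzD
      rw [h1.self_of_nhds] at hzD
      refine (hχr c hc z hzcb (by rwa [hcκ c hc])).congr ?_
      filter_upwards [h1] with y hy
      rw [hy]
    · push Not at h
      refine (regular_of_leviTwoPos (hL z hz) (hzc fun hc => ?_)).congr ?_
      · exact h z hc (mem_closedBall_self (hR₁ z hc).le)
      · filter_upwards [hfar z h] with y hy
        rw [hy, add_zero]
  · by_cases h : ∃ c ∈ crit, z ∈ closedBall c (R₁ c)
    · obtain ⟨c, hc, hzcb⟩ := h
      change κ - D < φ z + ∑ b ∈ crit, χ b z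
      rw [(hnear c hc z hzcb).self_of_nhds]
      have := hχE c hc z hz
      rw [hcκ c hc] at this
      exact this hzD (hz𝓔 c hc)
    · push Not at h
      change κ - D < φ z + ∑ b ∈ crit, χ b z
      rwa [(hfar z h).self_of_nhds, add_zero]

end

section

variable {E : Type*} [NormedAddCommGroup E] [NormedSpace ℂ E] [FiniteDimensional ℂ E]

lemma exists_small_avoiding {f : ℂ → E} (hf : Differentiable ℂ f) (crit : Finset E)
    {𝓔 : E → Submodule ℝ E}
    (h𝓔 : ∀ c ∈ crit, Module.finrank ℝ (𝓔 c) + 2 ≤ Module.finrank ℝ E) {s : ℝ} (hs : 0 < s) :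
    ∃ a : E, ‖a‖ < s ∧ ∀ ζ : ℂ, ‖ζ‖ = 1 → ∀ c ∈ crit, f ζ + ζ ^ 2 • a - c ∉ 𝓔 c := by
  rcases crit.eq_empty_or_nonempty with rfl | hne
  · exact ⟨0, by simpa using hs, by simp⟩
  have : FiniteDimensional ℝ E := inferInstance
  set G : ∀ c : E, ℝ × 𝓔 c → E := fun c x =>
    Complex.exp (-(2 * x.1) * Complex.I) • ((x.2 : E) + c - f (Complex.exp (x.1 * Complex.I)))
  have hG : ∀ c, ContDiff ℝ 1 (G c) := by
    intro c
    have h1 : ContDiff ℝ 1 f := hf.contDiff.restrict_scalars ℝ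
    have hofReal : ContDiff ℝ 1 (fun x : ℝ × 𝓔 c => (x.1 : ℂ)) :=
      Complex.ofRealCLM.contDiff.comp contDiff_fst
    have hexp : ∀ k : ℂ, ContDiff ℝ 1 (fun x : ℝ × 𝓔 c => Complex.exp (k * x.1 * Complex.I)) :=
      fun k => ((contDiff_const.mul hofReal).mul contDiff_const).cexp
    have h2 : ContDiff ℝ 1 (fun x : ℝ × 𝓔 c => (x.2 : E)) :=
      (𝓔 c).subtypeL.contDiff.comp contDiff_snd
    have h3 := (hexp (-2)).smul ((h2.add (contDiff_const (c := c))).sub (h1.comp (hexp 1)))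
    convert h3 using 1
    funext x
    simp [G]
  have hdim : dimH (⋃ c ∈ (crit : Set E), Set.range (G c)) < Module.finrank ℝ E := by
    obtain ⟨c₀, hc₀⟩ := hne
    have h0 := h𝓔 c₀ hc₀
    rw [dimH_bUnion crit.countable_toSet]
    refine lt_of_le_of_lt (b := ((Module.finrank ℝ E - 1 : ℕ) : ENNReal)) ?_ ?_
    · refine iSup₂_le fun c hc => (hG c).dimH_range_le.trans ?_
      rw [Module.finrank_prod, Module.finrank_self]
      have := h𝓔 c hc
      exact Nat.cast_le.2 (by omega)
    · exact Nat.cast_lt.2 (by omega)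
  obtain ⟨a, ha, has⟩ := (dense_compl_of_dimH_lt_finrank hdim).exists_dist_lt 0 hs
  refine ⟨a, by simpa [dist_eq_norm] using has, fun ζ hζ c hc hmem => ha ?_⟩
  refine Set.mem_iUnion₂.2 ⟨c, hc, (ζ.arg, ⟨_, hmem⟩), ?_⟩
  have h1 : Complex.exp (ζ.arg * Complex.I) = ζ := by
    have := Complex.norm_mul_exp_arg_mul_I ζ
    rwa [hζ, Complex.ofReal_one, one_mul] at this
  have h2 : Complex.exp (-(2 * ζ.arg) * Complex.I) * ζ ^ 2 = 1 := by
    conv_lhs => rw [← h1]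
    rw [← Complex.exp_nat_mul, ← Complex.exp_add, h1]
    convert Complex.exp_zero using 2
    push_cast; ring
  simp only [G, h1]
  rw [show f ζ + ζ ^ 2 • a - c + c - f ζ = ζ ^ 2 • a by abel, smul_smul, h2, one_smul]

/-- Discs in `X` whose boundary lies in `{a < φ}` can be approximated, with the same `1`-jet at the
origin, by discs whose boundary lies in `{b < φ}`, essentially without going below
`min (φ ∘ f) base`. -/
def Lift (X : Set E) (φ : E → ℝ) (base a b : ℝ) : Prop :=
  ∀ f, Adm X f → (∀ ζ, ‖ζ‖ = 1 → a < φ (f ζ)) → ∀ r < 1, ∀ ε > 0, ∃ F, Adm X F ∧ JetClose f F r ε ∧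
    (∀ ζ, ‖ζ‖ = 1 → b < φ (F ζ)) ∧ ∀ ζ, ‖ζ‖ ≤ 1 → min (φ (f ζ)) base - ε ≤ φ (F ζ)

omit [FiniteDimensional ℂ E] in
lemma Lift.trans {X : Set E} {φ : E → ℝ} {base a b c : ℝ} (h₁ : Lift X φ base a b)
    (h₂ : Lift X φ base b c) : Lift X φ base a c := by
  intro f hf hfa r hr ε hε
  obtain ⟨F, hF, hFf, hFb, hFm⟩ := h₁ f hf hfa r hr (ε / 2) (half_pos hε)
  obtain ⟨G, hG, hGF, hGc, hGm⟩ := h₂ F hF hFb r hr (ε / 2) (half_pos hε)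
  refine ⟨G, hG, ?_, hGc, fun ζ hζ => ?_⟩
  · have := hFf.trans hGF
    rwa [add_halves] at this
  · have h3 := hFm ζ hζ
    have h4 := hGm ζ hζ
    rcases min_choice (φ (F ζ)) base with h | h <;> rw [h] at h4
    · linarith
    · linarith [min_le_right (φ (f ζ)) base]

omit [FiniteDimensional ℂ E] in
lemma Lift.mono {X : Set E} {φ : E → ℝ} {base a a' b b' : ℝ} (h : Lift X φ base a b)
    (ha : a ≤ a') (hb : b' ≤ b) : Lift X φ base a' b' := by
  intro f hf hfa r hr ε hε
  obtain ⟨F, hF, hFf, hFb, hFm⟩ := h f hf (fun ζ hζ => ha.trans_lt (hfa ζ hζ)) r hr ε hε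
  exact ⟨F, hF, hFf, fun ζ hζ => hb.trans_lt (hFb ζ hζ), hFm⟩

omit [FiniteDimensional ℂ E] in
lemma Lift.refl (X : Set E) (φ : E → ℝ) (base a : ℝ) : Lift X φ base a a := by
  intro f hf hfa r hr ε hε
  exact ⟨f, hf, JetClose.refl f r hε, hfa, fun ζ _ => by linarith [min_le_left (φ (f ζ)) base]⟩

omit [FiniteDimensional ℂ E] in
lemma lift_of_local {X : Set E} {φ : E → ℝ} {base A B : ℝ}
    (h : ∀ κ, A < κ → κ < B → ∃ d > 0, Lift X φ base (κ - d) (κ + d)) {a b : ℝ} (ha : A < a)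
    (hab : a ≤ b) (hb : b < B) : Lift X φ base a b := by
  set T := {x | a ≤ x ∧ x ≤ b ∧ Lift X φ base a x}
  have haT : a ∈ T := ⟨le_rfl, hab, Lift.refl _ _ _ _⟩
  have hbdd : BddAbove T := ⟨b, fun x hx => hx.2.1⟩
  have hs1 : a ≤ sSup T := le_csSup hbdd haT
  have hs2 : sSup T ≤ b := csSup_le ⟨a, haT⟩ fun x hx => hx.2.1
  obtain ⟨d, hd, hl⟩ := h (sSup T) (by linarith) (by linarith)
  obtain ⟨x, hx, hxs⟩ := exists_lt_of_lt_csSup ⟨a, haT⟩ (by linarith : sSup T - d < sSup T)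
  have h1 : Lift X φ base a (sSup T + d) := hx.2.2.trans (hl.mono hxs.le le_rfl)
  rcases le_or_gt b (sSup T + d) with h2 | h2
  · exact h1.mono le_rfl h2
  · have : sSup T + d ≤ sSup T := le_csSup hbdd ⟨by linarith, h2.le, h1⟩
    linarith

lemma exists_lift_crossing {φ : E → ℝ} {X : Set E} (hX : IsOpen X)
    (hφ : ∀ z ∈ X, ContDiffAt ℝ 2 φ z) (hL : ∀ z ∈ X, LeviTwoPos φ z) {A B κ : ℝ}
    (hK : IsCompact {z ∈ X | A ≤ φ z ∧ φ z ≤ B}) (hAκ : A < κ) (hκB : κ < B)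
    (hfin : {z ∈ X | A ≤ φ z ∧ φ z ≤ B ∧ fderiv ℝ φ z = 0}.Finite)
    (hnd : ∀ z ∈ X, A ≤ φ z → φ z ≤ B → fderiv ℝ φ z = 0 →
      ∀ v, fderiv ℝ (fderiv ℝ φ) z v = 0 → v = 0) :
    ∃ d > 0, Lift X φ A (κ - d) (κ + d) := by
  classical
  have hφc : ContinuousOn φ X := fun z hz => (hφ z hz).continuousAt.continuousWithinAt
  obtain ⟨w, hw, hwA, hwB, hwc⟩ : ∃ w > 0, 4 * w ≤ κ - A ∧ 4 * w ≤ B - κ ∧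
      ∀ z ∈ X, κ - 4 * w ≤ φ z → φ z ≤ κ + 4 * w → fderiv ℝ φ z = 0 → φ z = κ := by
    have e0 : ∀ᶠ w : ℝ in 𝓝[>] 0, 0 < w := self_mem_nhdsWithin
    have e1 : ∀ x : ℝ, 0 < x → ∀ᶠ w : ℝ in 𝓝[>] 0, 4 * w < x := fun x hx => by
      filter_upwards [nhdsWithin_le_nhds (Iio_mem_nhds (by linarith : (0 : ℝ) < x / 4))] with w hw
      have : w < x / 4 := hw
      linarith
    have e2 : ∀ᶠ w : ℝ in 𝓝[>] 0, ∀ z ∈ hfin.toFinset, φ z ≠ κ → 4 * w < |φ z - κ| := by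
      refine (eventually_all_finset _).2 fun z _ => ?_
      by_cases h : φ z = κ
      · exact Eventually.of_forall fun _ h' => absurd h h'
      · filter_upwards [e1 _ (abs_pos.2 (sub_ne_zero.2 h))] with w hw _ using hw
    obtain ⟨w, h0, h1, h2, h3⟩ := (e0.and ((e1 _ (sub_pos.2 hAκ)).and
      ((e1 _ (sub_pos.2 hκB)).and e2))).exists
    refine ⟨w, h0, h1.le, h2.le, fun z hz hz1 hz2 hz3 => ?_⟩
    by_contra hne
    have := h3 z (hfin.mem_toFinset.2 ⟨hz, by linarith, by linarith, hz3⟩) hne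
    exact this.not_ge (abs_le.2 ⟨by linarith, by linarith⟩)
  set crit := hfin.toFinset.filter fun z => φ z = κ with hcrit
  have hmem : ∀ z, z ∈ crit ↔ (z ∈ X ∧ A ≤ φ z ∧ φ z ≤ B ∧ fderiv ℝ φ z = 0) ∧ φ z = κ := by
    intro z
    rw [hcrit, Finset.mem_filter, hfin.mem_toFinset]; rfl
  obtain ⟨𝓔, D, χ, hD, hDw, h𝓔, hχc, hχw, hχφ, hχr, hχE⟩ := exists_crossing_finset hX hφ hL hw crit
    (fun c hc => ((hmem c).1 hc).1.1) (fun c hc => ((hmem c).1 hc).2)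
    (fun c hc => ((hmem c).1 hc).1.2.2.2) fun c hc => by
      obtain ⟨⟨h1, h2, h3, h4⟩, -⟩ := (hmem c).1 hc
      exact hnd c h1 h2 h3 h4
  have hψ : ∀ z ∈ X, ContDiffAt ℝ 2 (fun y => φ y + χ y) z := fun z hz => (hφ z hz).add (hχc z hz)
  have hψc : ContinuousOn (fun y => φ y + χ y) X :=
    fun z hz => (hψ z hz).continuousAt.continuousWithinAt
  refine ⟨D / 2, half_pos hD, fun f hf hfa r hr ε hε => ?_⟩
  have hcirc : IsCompact {ζ : ℂ | ‖ζ‖ = 1} := by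
    simpa [sphere, dist_eq_norm] using isCompact_sphere (0 : ℂ) 1
  have hdisc : IsCompact {ζ : ℂ | ‖ζ‖ ≤ 1} := by
    simpa [closedBall, dist_eq_norm] using isCompact_closedBall (0 : ℂ) 1
  -- A generic small perturbation avoids the bad subspaces.
  obtain ⟨δ, hδ, hδX⟩ := exists_uniform_nhd hX hφc (hdisc.image hf.1.continuous)
    (by rintro _ ⟨ζ, hζ, rfl⟩; exact hf.2 ζ hζ) (lt_min (half_pos hε) (half_pos hD))
  obtain ⟨a, ha, hav⟩ := exists_small_avoiding hf.1 crit h𝓔 (lt_min hδ (half_pos hε))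
  set f₀ : ℂ → E := fun ζ => f ζ + ζ ^ 2 • a with hf₀
  obtain ⟨hf₀d, hf₀0, hf₀1⟩ := jet_add_sq_smul hf.1 (differentiable_const a)
  have hf₀f : ∀ ζ, ‖ζ‖ ≤ 1 → ‖f₀ ζ - f ζ‖ ≤ ‖a‖ := fun ζ hζ => by
    rw [hf₀, add_sub_cancel_left, norm_smul, norm_pow]
    exact mul_le_of_le_one_left (norm_nonneg _) (pow_le_one₀ (norm_nonneg _) hζ)
  have hf₀φ : ∀ ζ, ‖ζ‖ ≤ 1 → f₀ ζ ∈ X ∧ |φ (f₀ ζ) - φ (f ζ)| < min (ε / 2) (D / 2) := fun ζ hζ =>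
    hδX _ ⟨ζ, hζ, rfl⟩ _ ((hf₀f ζ hζ).trans_lt (ha.trans_le (min_le_left _ _)))
  have hf₀A : Adm X f₀ := ⟨hf₀d, fun ζ hζ => (hf₀φ ζ hζ).1⟩
  have hJ : JetClose f f₀ r (ε / 2) := ⟨hf₀0, hf₀1, fun ζ hζ =>
    (hf₀f ζ (hζ.trans hr.le)).trans_lt (ha.trans_le (min_le_right _ _))⟩
  have hlow : ∀ ζ, ‖ζ‖ = 1 → κ - D < φ (f₀ ζ) + χ (f₀ ζ) := by
    intro ζ hζ
    obtain ⟨h1, h2⟩ := hf₀φ ζ hζ.le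
    have h3 := abs_lt.1 (h2.trans_le (min_le_right _ _))
    exact hχE _ h1 (by linarith [hfa ζ hζ]) (hav ζ hζ)
  obtain ⟨α, hα, hαf⟩ : ∃ α, κ - D < α ∧ ∀ ζ, ‖ζ‖ = 1 → α ≤ φ (f₀ ζ) + χ (f₀ ζ) := by
    obtain ⟨ζ₀, h1, h2⟩ := hcirc.exists_isMinOn ⟨1, by simp⟩
      (f := fun ζ => φ (f₀ ζ) + χ (f₀ ζ))
      (hψc.comp hf₀d.continuous.continuousOn fun ζ hζ => hf₀A.2 ζ (le_of_eq hζ))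
    exact ⟨_, hlow ζ₀ h1, fun ζ hζ => h2 hζ⟩
  have hband : IsCompact {z ∈ X | min α (κ + 2 * w) ≤ φ z + χ z ∧ φ z + χ z ≤ κ + 3 * w} := by
    have h1 := (hψc.mono (fun z hz => hz.1 : {z ∈ X | A ≤ φ z ∧ φ z ≤ B} ⊆ X)
      ).preimage_isClosed_of_isClosed
      hK.isClosed (isClosed_Icc (a := min α (κ + 2 * w)) (b := κ + 3 * w))
    convert hK.of_isClosed_subset h1 Set.inter_subset_left using 1
    ext z
    have h4 := abs_le.1 (hχw z)
    refine ⟨fun ⟨hz, hz1, hz2⟩ => ?_, fun ⟨hz, hz1⟩ => ⟨hz.1, hz1⟩⟩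
    have hz3 : κ - D < φ z + χ z := (lt_min hα (by linarith)).trans_le hz1
    exact ⟨⟨hz, by linarith, by linarith⟩, hz1, hz2⟩
  obtain ⟨F, hF, hFJ, hFm, hFb⟩ := exists_lift_of_regular hX hψ (min_le_right α (κ + 2 * w))
    (by linarith : κ + 2 * w < κ + 3 * w) hband
    (fun z hz hz1 hz2 => by
      have hz3 : κ - D < φ z + χ z := (lt_min hα (by linarith)).trans_le hz1
      have h4 := abs_le.1 (hχw z)
      refine hχr z hz hz3 fun hzc hd => hzc ((hmem z).2 ⟨⟨hz, by linarith, by linarith, hd⟩, ?_⟩)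
      exact hwc z hz (by linarith) (by linarith) hd)
    hf₀A (fun ζ hζ => (min_le_left _ _).trans (hαf ζ hζ)) hr (half_pos hε)
  refine ⟨F, hF, ?_, fun ζ hζ => ?_, fun ζ hζ => ?_⟩
  · have := hJ.trans hFJ
    rwa [add_halves] at this
  · have h1 := hFb ζ hζ
    have h2 := abs_le.1 (hχw (F ζ))
    linarith
  · have h1 := hFm ζ hζ
    have h2 := abs_lt.1 ((hf₀φ ζ hζ).2.trans_le (min_le_left _ _))
    have h3 := abs_le.1 (hχw (f₀ ζ))
    have h4 := min_le_left (φ (f ζ)) A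
    have h5 := min_le_right (φ (f ζ)) A
    by_cases hc1 : χ (F ζ) = 0
    · by_cases hc2 : χ (f₀ ζ) = 0
      · linarith
      · have := hχφ _ (hf₀A.2 ζ hζ) hc2
        linarith
    · have := hχφ _ (hF.2 ζ hζ) hc1
      linarith

end

section

section Morse

variable {E : Type*} [NormedAddCommGroup E] [NormedSpace ℝ E] [FiniteDimensional ℝ E]

lemma exists_dual_equiv : Nonempty ((E →L[ℝ] ℝ) ≃L[ℝ] E) := by
  refine ⟨ContinuousLinearEquiv.ofFinrankEq ?_⟩
  rw [← LinearEquiv.finrank_eq (LinearMap.toContinuousLinearMap (𝕜 := ℝ) (E := E) (F' := ℝ))]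
  exact Subspace.dual_finrank_eq

lemma finite_critical {φ : E → ℝ} {K : Set E} (hK : IsCompact K)
    (hφ : ∀ z ∈ K, ContDiffAt ℝ 2 φ z)
    (hnd : ∀ z ∈ K, fderiv ℝ φ z = 0 → ∀ v, fderiv ℝ (fderiv ℝ φ) z v = 0 → v = 0) :
    {z ∈ K | fderiv ℝ φ z = 0}.Finite := by
  obtain ⟨T⟩ := exists_dual_equiv (E := E)
  by_contra hinf
  obtain ⟨x, hxK, hx⟩ := Set.Infinite.exists_accPt_of_subset_isCompact hinf hK fun z hz => hz.1
  have hfr : ∃ᶠ z in 𝓝[≠] x, z ∈ {z ∈ K | fderiv ℝ φ z = 0} := accPt_iff_frequently_nhdsNE.1 hx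
  have hD : HasFDerivAt (fderiv ℝ φ) (fderiv ℝ (fderiv ℝ φ) x) x :=
    (((hφ x hxK).fderiv_right (m := 1) (by norm_num)).differentiableAt (by norm_num)).hasFDerivAt
  have hx0 : fderiv ℝ φ x = 0 := by
    by_contra hne
    have h1 : ∀ᶠ z in 𝓝[≠] x, fderiv ℝ φ z ≠ 0 :=
      nhdsWithin_le_nhds (hD.continuousAt.eventually_ne hne)
    obtain ⟨z, hz, hz'⟩ := (hfr.and_eventually h1).exists
    exact hz' hz.2
  have hTD := (T : (E →L[ℝ] ℝ) →L[ℝ] E).hasFDerivAt.comp x hD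
  have hker : LinearMap.ker (((T : (E →L[ℝ] ℝ) →L[ℝ] E).comp (fderiv ℝ (fderiv ℝ φ) x) : E →L[ℝ] E)
      : E →ₗ[ℝ] E) = ⊥ := by
    rw [LinearMap.ker_eq_bot']
    intro v hv
    exact hnd x hxK hx0 v (T.injective (hv.trans (map_zero T).symm))
  obtain ⟨C, -, hC⟩ := LinearMap.exists_antilipschitzWith _ hker
  have h2 := hTD.eventually_ne (c := 0) ⟨C, hC⟩
  obtain ⟨z, hz, hz'⟩ := (hfr.and_eventually h2).exists
  refine hz' ?_
  simp [hz.2]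

lemma exists_small_regular_value {φ : E → ℝ} {X : Set E} (hφ : ∀ z ∈ X, ContDiffAt ℝ 2 φ z) {s : ℝ}
    (hs : 0 < s) : ∃ l : E →L[ℝ] ℝ, (∀ x, |l x| ≤ s * ‖x‖) ∧ ∀ z ∈ X, fderiv ℝ φ z + l = 0 →
      ∀ v, fderiv ℝ (fderiv ℝ φ) z v = 0 → v = 0 := by
  obtain ⟨T⟩ := exists_dual_equiv (E := E)
  borelize E
  set S := {z ∈ X | ∃ v, v ≠ 0 ∧ fderiv ℝ (fderiv ℝ φ) z v = 0}
  have h0 : MeasureTheory.Measure.addHaar ((fun z => T (fderiv ℝ φ z)) '' S) = 0 := by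
    refine MeasureTheory.addHaar_image_eq_zero_of_det_fderivWithin_eq_zero _
      (f' := fun z => (T : (E →L[ℝ] ℝ) →L[ℝ] E).comp (fderiv ℝ (fderiv ℝ φ) z)) (fun z hz => ?_)
      fun z hz => ?_
    · have hD : HasFDerivAt (fderiv ℝ φ) (fderiv ℝ (fderiv ℝ φ) z) z :=
        (((hφ z hz.1).fderiv_right (m := 1) (by norm_num)).differentiableAt
          (by norm_num)).hasFDerivAt
      exact ((T : (E →L[ℝ] ℝ) →L[ℝ] E).hasFDerivAt.comp z hD).hasFDerivWithinAt
    · obtain ⟨-, v, hv, hv0⟩ := hz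
      by_contra hdet
      refine hv ?_
      have h1 := (LinearMap.equivOfDetNeZero _ hdet).injective
      refine h1 (a₁ := v) (a₂ := 0) ?_
      rw [map_zero]
      change T (fderiv ℝ (fderiv ℝ φ) z v) = 0
      rw [hv0, map_zero]
  have hdense : Dense {y | y ∉ (fun z => T (fderiv ℝ φ z)) '' S} :=
    MeasureTheory.Measure.dense_of_ae (MeasureTheory.compl_mem_ae_iff.2 h0)
  have hcont : ContinuousAt (fun y : E => -T.symm y) 0 := T.symm.continuous.neg.continuousAt
  have hev : ∀ᶠ y in 𝓝 (0 : E), ‖-T.symm y‖ < s := by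
    refine hcont.norm.eventually_lt_const ?_
    simpa using hs
  obtain ⟨y, hy, hyS⟩ := (hdense.inter_nhds_nonempty hev)
  refine ⟨-T.symm y, fun x => ?_, fun z hz hz0 v hv => ?_⟩
  · have h1 := (-T.symm y).le_opNorm x
    rw [Real.norm_eq_abs] at h1
    exact h1.trans (by gcongr; exact hyS.le)
  · by_contra hv0
    refine hy ⟨z, ⟨hz, v, hv0, hv⟩, ?_⟩
    rw [← sub_eq_add_neg, sub_eq_zero] at hz0
    simp [hz0]

omit [FiniteDimensional ℝ E] in
lemma fderiv_add_linear {φ : E → ℝ} (l : E →L[ℝ] ℝ) {z : E} (hφ : ContDiffAt ℝ 2 φ z) :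
    fderiv ℝ (fun y => φ y + l y) z = fderiv ℝ φ z + l ∧
      fderiv ℝ (fderiv ℝ (fun y => φ y + l y)) z = fderiv ℝ (fderiv ℝ φ) z := by
  have h1 : ∀ᶠ y in 𝓝 z, fderiv ℝ (fun y => φ y + l y) y = fderiv ℝ φ y + l :=
    (hφ.eventually (by norm_num)).mono fun y hy =>
      ((hy.differentiableAt (by norm_num)).hasFDerivAt.add l.hasFDerivAt).fderiv
  refine ⟨h1.self_of_nhds, ?_⟩
  rw [Filter.EventuallyEq.fderiv_eq h1, fderiv_add_const]

end Morse

end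

section

variable {E : Type*} [NormedAddCommGroup E] [NormedSpace ℂ E] [FiniteDimensional ℂ E]

lemma exists_lift_level {ρ : E → ℝ} {X : Set E} (hX : IsOpen X)
    (hρ : ∀ z ∈ X, ContDiffAt ℝ 2 ρ z) (hL : ∀ z ∈ X, LeviTwoPos ρ z)
    (hexh : ∀ c : ℝ, IsCompact {z ∈ X | ρ z ≤ c}) {f : ℂ → E} (hf : Adm X f) {c : ℝ}
    (hfc : ∀ ζ, ‖ζ‖ = 1 → c < ρ (f ζ)) {r : ℝ} (hr : r < 1) {ε : ℝ} (hε : 0 < ε) :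
    ∃ F, Adm X F ∧ JetClose f F r ε ∧ (∀ ζ, ‖ζ‖ = 1 → c + 1 < ρ (F ζ)) ∧
      ∀ ζ, ‖ζ‖ ≤ 1 → min (ρ (f ζ)) (c - 1) - ε ≤ ρ (F ζ) := by
  have hρc : ContinuousOn ρ X := fun z hz => (hρ z hz).continuousAt.continuousWithinAt
  have : FiniteDimensional ℝ E := inferInstance
  obtain ⟨M, hM⟩ : ∃ M, ∀ ζ, ‖ζ‖ ≤ 1 → ρ (f ζ) < M := by
    have h1 : ContinuousOn (fun ζ => ρ (f ζ)) (closedBall (0 : ℂ) 1) :=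
      hρc.comp hf.1.continuous.continuousOn fun ζ hζ => hf.2 ζ (by simpa using hζ)
    obtain ⟨M, hM⟩ := (isCompact_closedBall (0 : ℂ) 1).bddAbove_image h1
    refine ⟨M + 1, fun ζ hζ => ?_⟩
    have := hM ⟨ζ, by simpa using hζ, rfl⟩
    linarith
  set M' := max M (c + 5)
  have hMM' : M ≤ M' := le_max_left _ _
  have hcM' : c + 5 ≤ M' := le_max_right _ _
  obtain ⟨R, hR, hRb⟩ := (hexh M').isBounded.exists_pos_norm_le
  set s := min (1 / 8) (ε / 4)
  have hs : 0 < s := lt_min (by norm_num) (by positivity)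
  have hs8 : s ≤ 1 / 8 := min_le_left _ _
  have hsε : s ≤ ε / 4 := min_le_right _ _
  obtain ⟨l, hl, hnd⟩ := exists_small_regular_value hρ (div_pos hs hR)
  set φ : E → ℝ := fun z => ρ z + l z with hφdef
  have hlb : ∀ z ∈ X, ρ z ≤ M' → |l z| ≤ s := fun z hz hz' => by
    refine (hl z).trans ?_
    rw [div_mul_eq_mul_div, div_le_iff₀ hR]
    exact mul_le_mul_of_nonneg_left (hRb z ⟨hz, hz'⟩) hs.le
  set Y := {z ∈ X | ρ z < M'} with hYdef
  have hYX : Y ⊆ X := fun z hz => hz.1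
  have hY : IsOpen Y := hρc.isOpen_inter_preimage hX isOpen_Iio
  have hφ : ∀ z ∈ Y, ContDiffAt ℝ 2 φ z := fun z hz =>
    (hρ z hz.1).add (l.contDiff (n := 2)).contDiffAt
  have hφL : ∀ z ∈ Y, LeviTwoPos φ z := fun z hz => by
    obtain ⟨V, hV, hV'⟩ := hL z hz.1
    refine ⟨V, hV, fun w hw hw0 => ?_⟩
    have := hV' w hw hw0
    rw [levi, (fderiv_add_linear l (hρ z hz.1)).2]
    exact this
  have hlY : ∀ z ∈ Y, |l z| ≤ s := fun z hz => hlb z hz.1 hz.2.le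
  have hK : IsCompact {z ∈ Y | c - 1 / 2 ≤ φ z ∧ φ z ≤ c + 2} := by
    have h1 : {z ∈ Y | c - 1 / 2 ≤ φ z ∧ φ z ≤ c + 2} =
        {z ∈ X | ρ z ≤ M'} ∩ φ ⁻¹' Set.Icc (c - 1 / 2) (c + 2) := by
      ext z
      constructor
      · rintro ⟨hz, h⟩
        exact ⟨⟨hz.1, hz.2.le⟩, h⟩
      · rintro ⟨hz, h⟩
        refine ⟨⟨hz.1, ?_⟩, h⟩
        have h2 := (abs_le.1 (hlb z hz.1 hz.2)).1
        have h3 : ρ z + l z ≤ c + 2 := h.2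
        linarith
    rw [h1]
    refine (hexh M').of_isClosed_subset ?_ Set.inter_subset_left
    refine ContinuousOn.preimage_isClosed_of_isClosed ?_ (hexh M').isClosed isClosed_Icc
    exact (hρc.mono fun z hz => hz.1).add l.continuous.continuousOn
  have hnd' : ∀ z ∈ Y, c - 1 / 2 ≤ φ z → φ z ≤ c + 2 → fderiv ℝ φ z = 0 →
      ∀ v, fderiv ℝ (fderiv ℝ φ) z v = 0 → v = 0 := fun z hz _ _ hz0 v hv => by
    obtain ⟨h1, h2⟩ := fderiv_add_linear l (hρ z hz.1)
    refine hnd z hz.1 (h1.symm.trans hz0) v ?_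
    rw [← h2]
    exact hv
  have hfin : {z ∈ Y | c - 1 / 2 ≤ φ z ∧ φ z ≤ c + 2 ∧ fderiv ℝ φ z = 0}.Finite := by
    refine (finite_critical hK (fun z hz => hφ z hz.1)
      fun z hz => hnd' z hz.1 hz.2.1 hz.2.2).subset ?_
    rintro z ⟨hz, h1, h2, h3⟩
    exact ⟨⟨hz, h1, h2⟩, h3⟩
  have hlift : Lift Y φ (c - 1 / 2) (c - s) (c + 1 + s) :=
    lift_of_local (A := c - 1 / 2) (B := c + 2)
      (fun κ h1 h2 => exists_lift_crossing hY hφ hφL hK h1 h2 hfin hnd')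
      (by linarith) (by linarith) (by linarith)
  have hfY : Adm Y f := ⟨hf.1, fun ζ hζ => ⟨hf.2 ζ hζ, (hM ζ hζ).trans_le hMM'⟩⟩
  have hfφ : ∀ ζ, ‖ζ‖ = 1 → c - s < φ (f ζ) := fun ζ hζ => by
    have h1 := (abs_le.1 (hlY _ (hfY.2 ζ hζ.le))).1
    have h2 := hfc ζ hζ
    change c - s < ρ (f ζ) + l (f ζ)
    linarith
  obtain ⟨F, hF, hFf, hFb, hFm⟩ := hlift f hfY hfφ r hr (ε / 4) (by positivity)
  refine ⟨F, ⟨hF.1, fun ζ hζ => hYX (hF.2 ζ hζ)⟩, hFf.mono le_rfl (by linarith),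
    fun ζ hζ => ?_, fun ζ hζ => ?_⟩
  · have h1 := (abs_le.1 (hlY _ (hF.2 ζ hζ.le))).2
    have h2 : c + 1 + s < ρ (F ζ) + l (F ζ) := hFb ζ hζ
    linarith
  · have h1 := (abs_le.1 (hlY _ (hF.2 ζ hζ))).2
    have h2 : min (ρ (f ζ) + l (f ζ)) (c - 1 / 2) - ε / 4 ≤ ρ (F ζ) + l (F ζ) := hFm ζ hζ
    have h3 := (abs_le.1 (hlY _ (hfY.2 ζ hζ))).1
    have h4 : min (ρ (f ζ)) (c - 1) - s ≤ min (ρ (f ζ) + l (f ζ)) (c - 1 / 2) :=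
      le_min (by linarith [min_le_left (ρ (f ζ)) (c - 1)])
        (by linarith [min_le_right (ρ (f ζ)) (c - 1)])
    linarith

end

section

variable {E : Type*} [NormedAddCommGroup E] [NormedSpace ℂ E]

/-- `f` maps the closed disc into `X` stably under `2 * e`-perturbations, and `ρ ∘ f` exceeds `c`
on the annulus `r ≤ ‖ζ‖ ≤ 1`. -/
structure Stable (X : Set E) (ρ : E → ℝ) (c r e : ℝ) (f : ℂ → E) : Prop where
  adm : Adm X f
  r_lt : r < 1
  e_pos : 0 < e
  level : ∀ ζ, r ≤ ‖ζ‖ → ‖ζ‖ ≤ 1 → c < ρ (f ζ)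
  near : ∀ ζ, ‖ζ‖ ≤ 1 → ∀ y, ‖y - f ζ‖ ≤ 2 * e → y ∈ X ∧ |ρ y - ρ (f ζ)| < 1

lemma Adm.exists_stable {X : Set E} (hX : IsOpen X) {ρ : E → ℝ} (hρ : ContinuousOn ρ X)
    {f : ℂ → E} (hf : Adm X f) {c : ℝ} (hc : ∀ ζ, ‖ζ‖ = 1 → c < ρ (f ζ)) {r₀ e₀ : ℝ}
    (hr₀ : r₀ < 1) (he₀ : 0 < e₀) : ∃ r e, r₀ ≤ r ∧ e ≤ e₀ ∧ Stable X ρ c r e f := by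
  have hmaps : Set.MapsTo f (closedBall 0 1) X := fun ζ hζ => hf.2 ζ (by simpa using hζ)
  have hcomp := isCompact_closedBall (0 : ℂ) 1
  have hρf : ContinuousOn (fun ζ => ρ (f ζ)) (closedBall 0 1) :=
    hρ.comp hf.1.continuous.continuousOn hmaps
  obtain ⟨δ, hδ, hδ'⟩ := exists_uniform_nhd hX hρ (hcomp.image hf.1.continuous)
    (Set.image_subset_iff.2 hmaps) one_pos
  have hC : IsCompact (closedBall (0 : ℂ) 1 ∩ (fun ζ => ρ (f ζ)) ⁻¹' Set.Iic c) :=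
    hcomp.of_isClosed_subset
      (hρf.preimage_isClosed_of_isClosed hcomp.isClosed isClosed_Iic) Set.inter_subset_left
  obtain ⟨r₁, hr₁, hr₁'⟩ : ∃ r₁ < 1, ∀ ζ, ‖ζ‖ ≤ 1 → ρ (f ζ) ≤ c → ‖ζ‖ < r₁ := by
    rcases (closedBall (0 : ℂ) 1 ∩ (fun ζ => ρ (f ζ)) ⁻¹' Set.Iic c).eq_empty_or_nonempty
      with h | h
    · refine ⟨0, one_pos, fun ζ h1 h2 => ?_⟩
      have : ζ ∈ (∅ : Set ℂ) := h ▸ ⟨by simpa using h1, h2⟩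
      exact absurd this (Set.notMem_empty _)
    · obtain ⟨ζ₀, ⟨h1, h2⟩, hmax⟩ := hC.exists_isMaxOn h continuous_norm.continuousOn
      have h1 : ‖ζ₀‖ ≤ 1 := by simpa using h1
      have h3 : ‖ζ₀‖ < 1 := lt_of_le_of_ne h1 fun h => (hc ζ₀ h).not_ge h2
      refine ⟨(‖ζ₀‖ + 1) / 2, by linarith, fun ζ h4 h5 => ?_⟩
      have h6 : ‖ζ‖ ≤ ‖ζ₀‖ := hmax ⟨by simpa using h4, h5⟩
      linarith
  refine ⟨max r₀ r₁, min e₀ (δ / 3), le_max_left _ _, min_le_left _ _, hf, max_lt hr₀ hr₁,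
    lt_min he₀ (by positivity), fun ζ h1 h2 => ?_, fun ζ hζ y hy => ?_⟩
  · by_contra! h
    exact (hr₁' ζ h2 h).not_ge ((le_max_right _ _).trans h1)
  · refine hδ' _ ⟨ζ, by simpa using hζ, rfl⟩ y ?_
    linarith [min_le_right e₀ (δ / 3)]

lemma exists_stable_seq [FiniteDimensional ℂ E] {ρ : E → ℝ} {X : Set E} (hX : IsOpen X)
    (hρ : ∀ z ∈ X, ContDiffAt ℝ 2 ρ z) (hL : ∀ z ∈ X, LeviTwoPos ρ z)
    (hexh : ∀ c : ℝ, IsCompact {z ∈ X | ρ z ≤ c}) {f₀ : ℂ → E} (hf₀ : Adm X f₀) {c : ℝ}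
    (hc : ∀ ζ, ‖ζ‖ = 1 → c < ρ (f₀ ζ)) :
    ∃ (f : ℕ → ℂ → E) (r e : ℕ → ℝ), f 0 = f₀ ∧ (∀ k : ℕ, Stable X ρ (c + k) (r k) (e k) (f k)) ∧
      (∀ k : ℕ, 1 - 1 / ((k : ℝ) + 1) ≤ r k) ∧ Monotone r ∧ (∀ k, e (k + 1) ≤ e k / 2) ∧
      (∀ k, JetClose (f k) (f (k + 1)) (r k) (e k)) ∧
      ∀ k ζ, ‖ζ‖ ≤ 1 → min (ρ (f k ζ)) (c + k - 1) - 1 ≤ ρ (f (k + 1) ζ) := by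
  have hρc : ContinuousOn ρ X := fun z hz => (hρ z hz).continuousAt.continuousWithinAt
  let P : ℕ → (ℂ → E) × ℝ × ℝ → Prop := fun k x =>
    Stable X ρ (c + k) x.2.1 x.2.2 x.1 ∧ 1 - 1 / ((k : ℝ) + 1) ≤ x.2.1
  let R : ℕ → (ℂ → E) × ℝ × ℝ → (ℂ → E) × ℝ × ℝ → Prop := fun k x y =>
    x.2.1 ≤ y.2.1 ∧ y.2.2 ≤ x.2.2 / 2 ∧ JetClose x.1 y.1 x.2.1 x.2.2 ∧
      ∀ ζ, ‖ζ‖ ≤ 1 → min (ρ (x.1 ζ)) (c + k - 1) - 1 ≤ ρ (y.1 ζ)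
  have hstep : ∀ k (x : {x // P k x}), ∃ y : {y // P (k + 1) y}, R k x y := by
    rintro k ⟨⟨f, r, e⟩, hS, hr⟩
    obtain ⟨F, hF, hFf, hFb, hFm⟩ := exists_lift_level hX hρ hL hexh hS.adm
      (fun ζ hζ => hS.level ζ (by rw [hζ]; exact hS.r_lt.le) hζ.le) hS.r_lt
      (lt_min hS.e_pos one_pos)
    have h1 : 1 - 1 / (((k + 1 : ℕ) : ℝ) + 1) < 1 := by
      have : 0 < 1 / (((k + 1 : ℕ) : ℝ) + 1) := by positivity
      linarith
    obtain ⟨r', e', hr', he', hS'⟩ := hF.exists_stable hX hρc hFb (max_lt hS.r_lt h1)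
      (half_pos hS.e_pos)
    refine ⟨⟨(F, r', e'), ?_, (le_max_right _ _).trans hr'⟩, (le_max_left _ _).trans hr', he',
      hFf.mono le_rfl (min_le_left _ _), fun ζ hζ => ?_⟩
    · rw [add_assoc] at hS'
      exact_mod_cast hS'
    · have := hFm ζ hζ
      have h2 := min_le_right e 1
      change min (ρ (f ζ)) (c + k - 1) - 1 ≤ ρ (F ζ)
      linarith
  obtain ⟨r₀, e₀, hr₀, -, hS₀⟩ := hf₀.exists_stable hX hρc hc (zero_lt_one' ℝ) one_pos
  choose next hnext using hstep
  let g : ∀ k, {x // P k x} := fun k =>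
    Nat.rec (motive := fun k => {x // P k x}) ⟨(f₀, r₀, e₀), by simpa using hS₀, by simpa using hr₀⟩
      (fun k x => next k x) k
  have hg : ∀ k, R k (g k).1 (g (k + 1)).1 := fun k => hnext k (g k)
  exact ⟨fun k => (g k).1.1, fun k => (g k).1.2.1, fun k => (g k).1.2.2, rfl, fun k => (g k).2.1,
    fun k => (g k).2.2, monotone_nat_of_le_succ fun k => (hg k).1, fun k => (hg k).2.1,
    fun k => (hg k).2.2.1, fun k => (hg k).2.2.2⟩

lemma exists_proper_disc [FiniteDimensional ℂ E] {ρ : E → ℝ} {X : Set E} (hX : IsOpen X)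
    (hρ : ∀ z ∈ X, ContDiffAt ℝ 2 ρ z) (hL : ∀ z ∈ X, LeviTwoPos ρ z)
    (hexh : ∀ c : ℝ, IsCompact {z ∈ X | ρ z ≤ c}) {f₀ : ℂ → E} (hf₀ : Adm X f₀) :
    ∃ F : ℂ → E, DifferentiableOn ℂ F (ball 0 1) ∧ (∀ ζ ∈ ball (0 : ℂ) 1, F ζ ∈ X) ∧
      (∀ K ⊆ X, IsCompact K → IsCompact {ζ ∈ ball (0 : ℂ) 1 | F ζ ∈ K}) ∧
      F 0 = f₀ 0 ∧ deriv F 0 = deriv f₀ 0 := by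
  have : CompleteSpace E := FiniteDimensional.complete ℂ E
  have hρc : ContinuousOn ρ X := fun z hz => (hρ z hz).continuousAt.continuousWithinAt
  obtain ⟨c, hc⟩ : ∃ c, ∀ ζ, ‖ζ‖ = 1 → c < ρ (f₀ ζ) := by
    have h1 : ContinuousOn (fun ζ => ρ (f₀ ζ)) (sphere (0 : ℂ) 1) :=
      hρc.comp hf₀.1.continuous.continuousOn fun ζ hζ => hf₀.2 ζ (by simpa using hζ.le)
    obtain ⟨m, hm⟩ := (isCompact_sphere (0 : ℂ) 1).bddBelow_image h1
    refine ⟨m - 1, fun ζ hζ => ?_⟩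
    have : m ≤ ρ (f₀ ζ) := hm ⟨ζ, by simpa using hζ, rfl⟩
    linarith
  obtain ⟨f, r, e, hf0, hS, hr, hmono, he, hjet, hmin⟩ := exists_stable_seq hX hρ hL hexh hf₀ hc
  have hpow : ∀ k j, e (k + j) ≤ 2 * e k / 2 / 2 ^ j := by
    intro k j
    induction j with
    | zero => simp
    | succ j ih =>
      refine (he (k + j)).trans ?_
      rw [pow_succ, ← div_div]
      linarith
  have hr1 : ∀ x < 1, ∃ k, x < r k := by
    intro x hx
    obtain ⟨k, hk⟩ := exists_nat_one_div_lt (sub_pos.2 hx)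
    exact ⟨k, by linarith [hr k]⟩
  have hdist : ∀ k ζ, ‖ζ‖ ≤ r k → ∀ j,
      dist (f (k + j) ζ) (f (k + j + 1) ζ) ≤ 2 * e k / 2 / 2 ^ j := by
    intro k ζ hζ j
    rw [dist_comm, dist_eq_norm]
    exact ((hjet (k + j)).2.2 ζ (hζ.trans (hmono (Nat.le_add_right k j)))).le.trans (hpow k j)
  have hlim : ∀ ζ, ‖ζ‖ < 1 → ∃ y, Tendsto (fun k => f k ζ) atTop (𝓝 y) := by
    intro ζ hζ
    obtain ⟨k, hk⟩ := hr1 _ hζ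
    obtain ⟨y, hy⟩ :=
      cauchySeq_tendsto_of_complete (cauchySeq_of_le_geometric_two (hdist k ζ hk.le))
    refine ⟨y, (tendsto_add_atTop_iff_nat k).1 ?_⟩
    simpa only [add_comm] using hy
  choose! F hF using hlim
  have hFk : ∀ k ζ, ‖ζ‖ ≤ r k → ‖F ζ - f k ζ‖ ≤ 2 * e k := by
    intro k ζ hζ
    have h1 : Tendsto (fun j => f (k + j) ζ) atTop (𝓝 (F ζ)) := by
      have := (tendsto_add_atTop_iff_nat k).2 (hF ζ (hζ.trans_lt (hS k).r_lt))
      simpa only [add_comm] using this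
    have := dist_le_of_le_geometric_two_of_tendsto₀ (hdist k ζ hζ) h1
    rwa [dist_comm, dist_eq_norm] at this
  have hnear : ∀ k ζ, ‖ζ‖ ≤ r k → F ζ ∈ X ∧ |ρ (F ζ) - ρ (f k ζ)| < 1 := fun k ζ hζ =>
    (hS k).near ζ (hζ.trans (hS k).r_lt.le) _ (hFk k ζ hζ)
  have he0 : Tendsto e atTop (𝓝 0) := by
    refine squeeze_zero (fun k => (hS k).e_pos.le) (fun k => ?_)
      (tendsto_const_nhds.div_atTop (tendsto_pow_atTop_atTop_of_one_lt one_lt_two) :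
        Tendsto (fun k : ℕ => 2 * e 0 / 2 / (2 : ℝ) ^ k) atTop (𝓝 0))
    simpa using hpow 0 k
  have hloc : TendstoLocallyUniformlyOn f F atTop (ball 0 1) := by
    rw [Metric.tendstoLocallyUniformlyOn_iff]
    intro ε hε ζ hζ
    obtain ⟨k, hk⟩ := hr1 ‖ζ‖ (by simpa using hζ)
    refine ⟨ball 0 (r k), mem_nhdsWithin_of_mem_nhds (isOpen_ball.mem_nhds (by simpa using hk)), ?_⟩
    filter_upwards [eventually_ge_atTop k, he0.eventually_lt_const (half_pos hε)] with j hj hj' y hy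
    rw [dist_eq_norm]
    have hy : ‖y‖ < r k := by simpa using hy
    have := hFk j y (hy.le.trans (hmono hj))
    linarith
  have hfd : ∀ᶠ k in atTop, DifferentiableOn ℂ (f k) (ball 0 1) :=
    Eventually.of_forall fun k => (hS k).adm.1.differentiableOn
  have hFd : DifferentiableOn ℂ F (ball 0 1) := hloc.differentiableOn hfd isOpen_ball
  have hjet0 : ∀ k, f k 0 = f₀ 0 ∧ deriv (f k) 0 = deriv f₀ 0 := by
    intro k
    induction k with
    | zero => rw [hf0]; exact ⟨rfl, rfl⟩
    | succ k ih => exact ⟨(hjet k).1.trans ih.1, (hjet k).2.1.trans ih.2⟩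
  have h0 : (0 : ℂ) ∈ ball (0 : ℂ) 1 := by simp
  refine ⟨F, hFd, fun ζ hζ => ?_, fun K hKX hK => ?_, ?_, ?_⟩
  · obtain ⟨k, hk⟩ := hr1 ‖ζ‖ (by simpa using hζ)
    exact (hnear k ζ hk.le).1
  · obtain ⟨M, hM⟩ := hK.bddAbove_image (hρc.mono hKX)
    obtain ⟨k, hk⟩ := exists_nat_gt (M - c + 3)
    have hsub : ∀ ζ, ‖ζ‖ < 1 → F ζ ∈ K → ‖ζ‖ ≤ r k := by
      intro ζ hζ hζK
      by_contra! hlt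
      have hex := hr1 _ hζ
      have hspec := Nat.find_spec hex
      obtain ⟨m, hm⟩ : ∃ m, Nat.find hex = m + 1 := by
        refine Nat.exists_eq_succ_of_ne_zero fun h0 => ?_
        rw [h0] at hspec
        linarith [hmono (Nat.zero_le k)]
      have hm1 : r m ≤ ‖ζ‖ := not_lt.1 (Nat.find_min hex (by omega))
      rw [hm] at hspec
      have hkm : k ≤ m := by
        by_contra! h
        linarith [hmono (show m + 1 ≤ k from h)]
      have hkm' : (k : ℝ) ≤ m := by exact_mod_cast hkm
      have h1 := (hS m).level ζ hm1 hζ.le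
      have h2 := hmin m ζ hζ.le
      rw [min_eq_right (by linarith)] at h2
      have h3 := (abs_lt.1 (hnear (m + 1) ζ hspec.le).2).1
      have h4 : ρ (F ζ) ≤ M := hM ⟨F ζ, hζK, rfl⟩
      linarith
    have hB : closedBall (0 : ℂ) (r k) ⊆ ball 0 1 := closedBall_subset_ball (hS k).r_lt
    have heq : {ζ ∈ ball (0 : ℂ) 1 | F ζ ∈ K} = closedBall 0 (r k) ∩ F ⁻¹' K := by
      ext ζ
      exact ⟨fun h => ⟨by simpa using hsub ζ (by simpa using h.1) h.2, h.2⟩,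
        fun h => ⟨hB h.1, h.2⟩⟩
    rw [heq]
    exact (isCompact_closedBall _ _).of_isClosed_subset
      ((hFd.continuousOn.mono hB).preimage_isClosed_of_isClosed isClosed_closedBall hK.isClosed)
      Set.inter_subset_left
  · refine tendsto_nhds_unique (hF 0 (by simp)) ?_
    simp only [hjet0, tendsto_const_nhds]
  · have h1 := (hloc.deriv hfd isOpen_ball).tendsto_at h0
    refine tendsto_nhds_unique h1 ?_
    simp only [Function.comp_def, hjet0, tendsto_const_nhds]

lemma exists_adm_linear {X : Set E} (hX : IsOpen X) {p : E} (hp : p ∈ X) (v : E) :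
    ∃ (lam : ℝ) (f : ℂ → E), 0 < lam ∧ Adm X f ∧ f 0 = p ∧ deriv f 0 = lam • v := by
  obtain ⟨δ, hδ, hδX⟩ := Metric.isOpen_iff.1 hX p hp
  have hv : 0 < ‖v‖ + 1 := by positivity
  set lam := δ / (‖v‖ + 1)
  have hlam : 0 < lam := div_pos hδ hv
  have hd : ∀ ζ : ℂ, HasDerivAt (fun ζ : ℂ => p + ζ • (lam • v)) (lam • v) ζ := fun ζ => by
    simpa using ((hasDerivAt_id ζ).smul_const (lam • v)).const_add p
  refine ⟨lam, fun ζ => p + ζ • (lam • v), hlam, ⟨fun ζ => (hd ζ).differentiableAt, fun ζ hζ => ?_⟩,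
    by simp, (hd 0).deriv⟩
  refine hδX ?_
  rw [mem_ball, dist_eq_norm, add_sub_cancel_left, norm_smul, norm_smul,
    Real.norm_of_nonneg hlam.le]
  have h1 : lam * (‖v‖ + 1) = δ := div_mul_cancel₀ _ hv.ne'
  have h2 : ‖ζ‖ * (lam * ‖v‖) ≤ 1 * (lam * ‖v‖) := by gcongr
  linarith

end

end ProperDisc

/-- Proper holomorphic discs through any point in any direction in an
open set `X ⊆ ℂⁿ` (`n ≥ 2`) admitting a smooth exhaustion function whose Levi form has at
least 2 positive eigenvalues at each point. -/
theorem proper_disc_through_point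
    (n : ℕ) (hn : 2 ≤ n)
    (X : Set (EuclideanSpace ℂ (Fin n))) (hX : IsOpen X)
    (ρ : EuclideanSpace ℂ (Fin n) → ℝ)
    (hρ_smooth : ContDiffOn ℝ (⊤ : ℕ∞) ρ X)
    (hρ_exh : ∀ c : ℝ, IsCompact {z ∈ X | ρ z ≤ c})
    (hLevi : ∀ z ∈ X, ∃ V : Submodule ℂ (EuclideanSpace ℂ (Fin n)),
      Module.finrank ℂ V = 2 ∧ ∀ w ∈ V, w ≠ 0 →
        0 < fderiv ℝ (fderiv ℝ ρ) z w w
            + fderiv ℝ (fderiv ℝ ρ) z (Complex.I • w) (Complex.I • w))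
    (p : EuclideanSpace ℂ (Fin n)) (hp : p ∈ X)
    (v : EuclideanSpace ℂ (Fin n)) :
    ∃ (lam : ℝ) (f : ℂ → EuclideanSpace ℂ (Fin n)),
      0 < lam ∧
      DifferentiableOn ℂ f (ball (0 : ℂ) 1) ∧
      (∀ ζ ∈ ball (0 : ℂ) 1, f ζ ∈ X) ∧
      (∀ K : Set (EuclideanSpace ℂ (Fin n)), K ⊆ X → IsCompact K →
        IsCompact {ζ ∈ ball (0 : ℂ) 1 | f ζ ∈ K}) ∧
      f 0 = p ∧ deriv f 0 = lam • v := by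
  obtain ⟨lam, f₀, hlam, hf₀, h0, h1⟩ := ProperDisc.exists_adm_linear hX hp v
  have h2 : (2 : WithTop ℕ∞) ≤ ((⊤ : ℕ∞) : WithTop ℕ∞) := by
    exact WithTop.coe_le_coe.2 le_top
  have hρ : ∀ z ∈ X, ContDiffAt ℝ 2 ρ z := fun z hz =>
    (hρ_smooth.contDiffAt (hX.mem_nhds hz)).of_le h2
  have hL : ∀ z ∈ X, ProperDisc.LeviTwoPos ρ z := fun z hz => hLevi z hz
  obtain ⟨F, hF, hFX, hFK, hF0, hF1⟩ := ProperDisc.exists_proper_disc hX hρ hL hρ_exh hf₀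
  exact ⟨lam, F, hlam, hF, hFX, hFK, hF0.trans h0, hF1.trans h1⟩
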